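/- arXiv:2406.03171 — 3 statements merged into one kernel-verified Lean document; each statement's English description precedes it below -/
import Mathlib

section
/- Concentration of pairwise quadratic forms (Lemma A.2): Let z_1,…,z_n be i.i.d. random vectors in ℝ^d whose coordinates are i.i.d. with mean 0, variance 1, and |z_i(k)| ≤ C₀ d^{2/(8+m)} almost surely; let Σ ∈ ℝ^{d×d} be positive semidefinite with ‖Σ‖ ≤ C₁; suppose n ≤ ζ_max d; set θ := 1/2 − 2/(8+m) and fix ε_0 > 0. Then there exists D (depending only on C₀, C₁, ζ_max, m, ε_0) such that for all d ≥ D, with probability at least 1 − d^{-2}, max_{i≠j} | (z_i − z_j)^T Σ (z_i − z_j)/d − 2 Tr(Σ)/d | ≤ 4 d^{-θ} (log d)^{(1+ε_0)/2}. -/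
/-!
The difference `w = z i - z j` of two samples has independent symmetric coordinates of variance `2`
bounded by `R = 2 C₀ d ^ α`, where `α = 2 / (8 + m) ≤ 1/4`. The core is the exponential moment bound

`∫ exp (wᵀ A w) ≤ exp (2 tr A + 40 b² R² d)` for symmetric `A` with `‖A‖ ≤ b` and `16 b R² ≤ 1`

(`integral_exp_quad_le`). The variance proxy `b² R² d`, with `R²` instead of the `R⁴` of the
sub-Gaussian Hanson–Wright inequality, is what the rate `d ^ (-θ)` requires.

By symmetry the integrand may be averaged over independent signs with the moduli `|w k|` frozen.
For the resulting Rademacher chaos with positive semidefinite matrix `G`, Gaussian linearization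
along the eigenbasis of `G` bounds the sign average by the exponential moment of a sum of weighted
squared Gaussians, hence by `exp (tr G + 4 tr G²)` (`sum_signs_exp_quad`). Applied to
`G = diag w (A + b) diag w`, where the shift by `b` costs only the constant `b ∑ w k ²`, this gives
`exp (∑ (A k k * w k ² + 16 b² w k ⁴))` (`sum_signs_exp_weighted`), which is a product over
coordinates; each factor is integrated using `∫ w⁴ ≤ R² ∫ w²` (`integral_exp_coord_le`).

Markov's inequality for `A = ± lam • Σ` with `lam = d ^ (-1/2 - α) (log d) ^ (1/2)` bounds the
failure probability of one pair by `2 d ^ (-6)` for large `d`, and a union bound over the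
`n² ≤ ζmax² d²` pairs concludes.
-/

open MeasureTheory Matrix

/-- The spectral (ℓ²-operator) norm of a real square matrix. -/
noncomputable def opNorm {n : ℕ} (A : Matrix (Fin n) (Fin n) ℝ) : ℝ :=
  ‖Matrix.toEuclideanCLM (𝕜 := ℝ) A‖

/-! ### Exponential moments of Rademacher chaoses -/

/-- The sign encoded by a Boolean: `true` is `1`, `false` is `-1`. -/
def boolSign (b : Bool) : ℝ := if b then 1 else -1

lemma boolSign_sq (b : Bool) : boolSign b ^ 2 = 1 := by
  cases b <;> simp [boolSign]

lemma sum_signs_exp_linear {d : ℕ} (h : Fin d → ℝ) :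
    ∑ σ : Fin d → Bool, Real.exp (∑ k, boolSign (σ k) * h k)
      ≤ 2 ^ d * Real.exp (∑ k, h k ^ 2 / 2) := by
  have key : ∑ σ : Fin d → Bool, Real.exp (∑ k, boolSign (σ k) * h k)
      = ∏ k, (2 * Real.cosh (h k)) := by
    have := Finset.prod_univ_sum (fun _ : Fin d => (Finset.univ : Finset Bool))
      (fun k b => Real.exp (boolSign b * h k))
    rw [Fintype.piFinset_univ] at this
    simp_rw [Real.exp_sum]
    rw [← this]
    refine Finset.prod_congr rfl fun k _ => ?_
    rw [Real.cosh_eq]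
    simp [boolSign]
    ring
  rw [key, Finset.prod_mul_distrib, Real.exp_sum]
  simp only [Finset.prod_const, Finset.card_univ, Fintype.card_fin]
  gcongr with k
  exact Real.cosh_le_exp_half_sq _

lemma integrable_exp_mul_sq_gaussian {μ : ℝ} (hμ : μ ≤ 1 / 4) :
    Integrable (fun x : ℝ => Real.exp (μ * x ^ 2)) (ProbabilityTheory.gaussianReal 0 1) := by
  rw [ProbabilityTheory.gaussianReal_of_var_ne_zero _ one_ne_zero]
  rw [ProbabilityTheory.gaussianPDF_def]
  rw [integrable_withDensity_iff_integrable_smul' (by fun_prop) (by simp)]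
  have h := (integrable_exp_neg_mul_sq (b := 1 / 2 - μ) (by linarith)).const_mul (√(2 * Real.pi))⁻¹
  refine h.congr (Filter.Eventually.of_forall fun x => ?_)
  simp only [ProbabilityTheory.gaussianPDFReal, smul_eq_mul]
  rw [ENNReal.toReal_ofReal (by positivity)]
  simp only [NNReal.coe_one, mul_one, sub_zero]
  rw [mul_assoc, ← Real.exp_add]
  congr 2
  ring

/-- The Laplace transform of a squared standard Gaussian is `(1 - 2 μ) ^ (-1/2)`,
which is at most `exp (μ + 4 μ²)` for `μ ≤ 1/4`. -/
lemma integral_exp_mul_sq_gaussian_le {μ : ℝ} (hμ : μ ≤ 1 / 4) :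
    ∫ x : ℝ, Real.exp (μ * x ^ 2) ∂(ProbabilityTheory.gaussianReal 0 1)
      ≤ Real.exp (μ + 4 * μ ^ 2) := by
  rw [ProbabilityTheory.integral_gaussianReal_eq_integral_smul one_ne_zero]
  have h1 : ∀ x : ℝ, ProbabilityTheory.gaussianPDFReal 0 1 x • Real.exp (μ * x ^ 2)
      = (√(2 * Real.pi))⁻¹ * Real.exp (-(1 / 2 - μ) * x ^ 2) := by
    intro x
    simp only [ProbabilityTheory.gaussianPDFReal, smul_eq_mul, NNReal.coe_one, mul_one, sub_zero]
    rw [mul_assoc, ← Real.exp_add]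
    congr 2
    ring
  simp_rw [h1]
  rw [integral_const_mul, integral_gaussian, ← Real.sqrt_inv, ← Real.sqrt_mul (by positivity)]
  have h2 : (2 * Real.pi)⁻¹ * (Real.pi / (1 / 2 - μ)) = (1 - 2 * μ)⁻¹ := by
    have : 1 / 2 - μ ≠ 0 := by linarith
    have : 1 - 2 * μ ≠ 0 := by linarith
    have := Real.pi_ne_zero
    field_simp
  rw [h2]
  rw [Real.sqrt_le_left (Real.exp_pos _).le, ← Real.exp_nat_mul]
  rw [inv_le_iff_one_le_mul₀ (by linarith)]
  have h3 := Real.add_one_le_exp ((2 : ℕ) * (μ + 4 * μ ^ 2))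
  push_cast at h3 ⊢
  nlinarith [mul_nonneg (sq_nonneg μ) (by linarith : (0 : ℝ) ≤ 1 - 4 * μ)]

/-- **Exponential moment of a Rademacher chaos.** With the spectral decomposition
`G = ∑ μ i • u i (u i)ᵀ` one writes `exp (sᵀ G s)` as the Gaussian average of
`exp (∑ i, √(2 μ i) * g i * ⟪u i, s⟫)`; averaging over the signs first leaves
`exp (∑ i, μ i * g i ^ 2)`, by orthonormality of the `u i`. -/
lemma sum_signs_exp_quad {d : ℕ} (G : Matrix (Fin d) (Fin d) ℝ) (hG : G.PosSemidef)
    (hle : ∀ x : Fin d → ℝ, x ⬝ᵥ (G *ᵥ x) ≤ 1 / 4 * (x ⬝ᵥ x)) :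
    ∑ σ : Fin d → Bool, Real.exp ((fun k => boolSign (σ k)) ⬝ᵥ (G *ᵥ fun k => boolSign (σ k)))
      ≤ 2 ^ d * Real.exp (G.trace + 4 * (G * G).trace) := by
  obtain ⟨U, μ, hU1, hGU⟩ : ∃ (U : Matrix (Fin d) (Fin d) ℝ) (μ : Fin d → ℝ),
      Uᵀ * U = 1 ∧ G = U * diagonal μ * Uᵀ := by
    refine ⟨hG.1.eigenvectorUnitary, hG.1.eigenvalues, ?_, ?_⟩
    · have := Unitary.coe_star_mul_self hG.1.eigenvectorUnitary
      simpa [star_eq_conjTranspose, conjTranspose_eq_transpose_of_trivial] using this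
    · have := hG.1.spectral_theorem
      rw [Unitary.conjStarAlgAut_apply] at this
      simpa [star_eq_conjTranspose, conjTranspose_eq_transpose_of_trivial,
        Function.comp_def] using this
  have hquad : ∀ x : Fin d → ℝ, x ⬝ᵥ (G *ᵥ x) = ∑ i, μ i * (Uᵀ *ᵥ x) i ^ 2 := by
    intro x
    rw [hGU, ← mulVec_mulVec, ← mulVec_mulVec, dotProduct_mulVec, ← mulVec_transpose, dotProduct]
    refine Finset.sum_congr rfl fun i _ => ?_
    rw [mulVec_diagonal]
    ring
  have hiso : ∀ v : Fin d → ℝ, ∑ k, (U *ᵥ v) k ^ 2 = ∑ i, v i ^ 2 := by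
    intro v
    have : (U *ᵥ v) ⬝ᵥ (U *ᵥ v) = v ⬝ᵥ v := by
      rw [dotProduct_mulVec, ← mulVec_transpose, mulVec_mulVec, hU1, one_mulVec]
    simpa [dotProduct, sq] using this
  have hcol : ∀ i, Uᵀ *ᵥ (U *ᵥ Pi.single i 1) = Pi.single i 1 := by
    intro i
    rw [mulVec_mulVec, hU1, one_mulVec]
  have hμ : ∀ i, (U *ᵥ Pi.single i 1) ⬝ᵥ (G *ᵥ (U *ᵥ Pi.single i 1)) = μ i := by
    intro i
    rw [hquad, hcol, Finset.sum_eq_single i]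
    · simp
    · intro j _ hj; simp [hj]
    · simp
  have hμ0 : ∀ i, 0 ≤ μ i := fun i => by
    rw [← hμ i]
    simpa using hG.dotProduct_mulVec_nonneg (U *ᵥ Pi.single i 1)
  have hμ1 : ∀ i, μ i ≤ 1 / 4 := fun i => by
    rw [← hμ i]
    refine (hle _).trans ?_
    have := hiso (Pi.single i 1)
    rw [Finset.sum_eq_single (s := Finset.univ) (f := fun j => (Pi.single i (1 : ℝ) : Fin d → ℝ) j ^ 2) i
      (by intro j _ hj; simp [hj]) (by simp)] at this
    simp only [dotProduct, ← sq]
    rw [this]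
    simp
  have htr : G.trace = ∑ i, μ i := by
    rw [hGU, trace_mul_comm, ← Matrix.mul_assoc, hU1, Matrix.one_mul, trace_diagonal]
  have htr2 : (G * G).trace = ∑ i, μ i ^ 2 := by
    have : G * G = U * diagonal (fun i => μ i ^ 2) * Uᵀ := by
      calc G * G = U * diagonal μ * (Uᵀ * U) * diagonal μ * Uᵀ := by
            rw [hGU]; simp only [Matrix.mul_assoc]
        _ = _ := by
            rw [hU1, Matrix.mul_one, Matrix.mul_assoc U, diagonal_mul_diagonal]
            simp only [sq]
    rw [this, trace_mul_comm, ← Matrix.mul_assoc, hU1, Matrix.one_mul, trace_diagonal]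
  let γ := ProbabilityTheory.gaussianReal 0 1
  let s : (Fin d → Bool) → Fin d → ℝ := fun σ k => boolSign (σ k)
  let c : (Fin d → Bool) → Fin d → ℝ := fun σ i => √(2 * μ i) * (Uᵀ *ᵥ s σ) i
  have hlin : ∀ σ, Real.exp (s σ ⬝ᵥ (G *ᵥ s σ))
      = ∫ g : Fin d → ℝ, ∏ i, Real.exp (c σ i * g i) ∂(Measure.pi fun _ => γ) := by
    intro σ
    rw [integral_fintype_prod_eq_prod (fun i x => Real.exp (c σ i * x)), hquad, Real.exp_sum]
    refine Finset.prod_congr rfl fun i _ => ?_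
    have h := ProbabilityTheory.mgf_gaussianReal (p := γ) (X := id) (μ := 0) (v := 1)
      (by simp [γ]) (c σ i)
    simp only [ProbabilityTheory.mgf, id] at h
    rw [h]
    congr 1
    simp only [c, mul_pow, NNReal.coe_one]
    rw [Real.sq_sqrt (by linarith [hμ0 i])]
    ring
  have hint : ∀ σ, Integrable (fun g : Fin d → ℝ => ∏ i, Real.exp (c σ i * g i))
      (Measure.pi fun _ => γ) := fun σ =>
    Integrable.fintype_prod (f := fun i x => Real.exp (c σ i * x))
      fun i => ProbabilityTheory.integrable_exp_mul_gaussianReal _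
  have hint2 : Integrable (fun g : Fin d → ℝ => ∏ i, Real.exp (μ i * g i ^ 2))
      (Measure.pi fun _ => γ) :=
    Integrable.fintype_prod (f := fun i x => Real.exp (μ i * x ^ 2))
      fun i => integrable_exp_mul_sq_gaussian (hμ1 i)
  calc ∑ σ, Real.exp (s σ ⬝ᵥ (G *ᵥ s σ))
      = ∫ g : Fin d → ℝ, ∑ σ, ∏ i, Real.exp (c σ i * g i) ∂(Measure.pi fun _ => γ) := by
        rw [integral_finsetSum _ fun σ _ => hint σ]
        exact Finset.sum_congr rfl fun σ _ => hlin σ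
    _ ≤ ∫ g : Fin d → ℝ, 2 ^ d * ∏ i, Real.exp (μ i * g i ^ 2) ∂(Measure.pi fun _ => γ) := by
        refine integral_mono (integrable_finsetSum _ fun σ _ => hint σ) (hint2.const_mul _) ?_
        intro g
        let v : Fin d → ℝ := fun i => √(2 * μ i) * g i
        have h1 : ∀ σ, ∏ i, Real.exp (c σ i * g i)
            = Real.exp (∑ k, boolSign (σ k) * (U *ᵥ v) k) := by
          intro σ
          rw [← Real.exp_sum]
          congr 1
          have : s σ ⬝ᵥ (U *ᵥ v) = (Uᵀ *ᵥ s σ) ⬝ᵥ v := by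
            rw [dotProduct_mulVec, ← mulVec_transpose]
          change _ = s σ ⬝ᵥ (U *ᵥ v)
          rw [this, dotProduct]
          refine Finset.sum_congr rfl fun i _ => ?_
          simp only [c, v]
          ring
        simp only [h1]
        refine (sum_signs_exp_linear _).trans_eq ?_
        rw [← Finset.sum_div, hiso, Finset.sum_div, Real.exp_sum]
        congr 1
        refine Finset.prod_congr rfl fun i _ => ?_
        simp only [v, mul_pow]
        rw [Real.sq_sqrt (by linarith [hμ0 i])]
        congr 1
        ring
    _ = 2 ^ d * ∏ i, ∫ x, Real.exp (μ i * x ^ 2) ∂γ := by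
        rw [integral_const_mul, integral_fintype_prod_eq_prod (fun i x => Real.exp (μ i * x ^ 2))]
    _ ≤ 2 ^ d * Real.exp (G.trace + 4 * (G * G).trace) := by
        rw [htr, htr2, Finset.mul_sum, ← Finset.sum_add_distrib, Real.exp_sum]
        gcongr with i
        exact integral_exp_mul_sq_gaussian_le (hμ1 i)

/-! ### Sign averages with frozen moduli -/

lemma abs_quad_le {d : ℕ} {A : Matrix (Fin d) (Fin d) ℝ} {b : ℝ} (hb : 0 ≤ b)
    (hA : ∀ x, (A *ᵥ x) ⬝ᵥ (A *ᵥ x) ≤ b ^ 2 * (x ⬝ᵥ x)) (x : Fin d → ℝ) :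
    |x ⬝ᵥ (A *ᵥ x)| ≤ b * (x ⬝ᵥ x) := by
  have h0 : 0 ≤ x ⬝ᵥ x := by
    simpa using dotProduct_star_self_nonneg x
  refine abs_le_of_sq_le_sq ?_ (by positivity)
  have h1 := Finset.sum_mul_sq_le_sq_mul_sq Finset.univ x (A *ᵥ x)
  have h2 : (x ⬝ᵥ (A *ᵥ x)) ^ 2 ≤ (x ⬝ᵥ x) * ((A *ᵥ x) ⬝ᵥ (A *ᵥ x)) := by
    simpa [dotProduct, sq] using h1
  nlinarith [hA x, mul_le_mul_of_nonneg_left (hA x) h0]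

lemma row_sq_sum_le {d : ℕ} {A : Matrix (Fin d) (Fin d) ℝ} (hsymm : A.IsSymm) {b : ℝ}
    (hA : ∀ x, (A *ᵥ x) ⬝ᵥ (A *ᵥ x) ≤ b ^ 2 * (x ⬝ᵥ x)) (k : Fin d) :
    ∑ l, A k l ^ 2 ≤ b ^ 2 := by
  have h := hA (Pi.single k 1)
  simp only [mulVec_single_one, single_one_dotProduct, Pi.single_eq_same, mul_one] at h
  refine le_trans (le_of_eq ?_) h
  simp only [dotProduct, Matrix.col_apply, ← sq]
  exact Finset.sum_congr rfl fun l _ => by rw [hsymm.apply k l]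

lemma abs_diag_le {d : ℕ} {A : Matrix (Fin d) (Fin d) ℝ} {b : ℝ} (hb : 0 ≤ b)
    (hA : ∀ x, (A *ᵥ x) ⬝ᵥ (A *ᵥ x) ≤ b ^ 2 * (x ⬝ᵥ x)) (k : Fin d) : |A k k| ≤ b := by
  simpa using abs_quad_le hb hA (Pi.single k 1)

/-- Sign average of `exp (wᵀ A w)` when the moduli `|w k|` are frozen. The matrix `A` need not be
positive: shifting it by `b • 1` changes the exponent by the sign-independent amount
`b * ∑ k, w k ^ 2`, after which `sum_signs_exp_quad` applies to `diag w (A + b) diag w`. -/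
lemma sum_signs_exp_weighted {d : ℕ} {A : Matrix (Fin d) (Fin d) ℝ} (hsymm : A.IsSymm) {b R : ℝ}
    (hb : 0 ≤ b) (hA : ∀ x, (A *ᵥ x) ⬝ᵥ (A *ᵥ x) ≤ b ^ 2 * (x ⬝ᵥ x))
    (hbR : 16 * (b * R ^ 2) ≤ 1) {w : Fin d → ℝ} (hw : ∀ k, |w k| ≤ R) :
    ∑ σ : Fin d → Bool, Real.exp
        ((fun k => boolSign (σ k) * w k) ⬝ᵥ (A *ᵥ fun k => boolSign (σ k) * w k))
      ≤ 2 ^ d * ∏ k, Real.exp (A k k * w k ^ 2 + 16 * b ^ 2 * w k ^ 4) := by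
  let N : Matrix (Fin d) (Fin d) ℝ := A + b • 1
  let G : Matrix (Fin d) (Fin d) ℝ := diagonal w * N * diagonal w
  have hdiag : ∀ x : Fin d → ℝ, diagonal w *ᵥ x = fun k => x k * w k := fun x => by
    ext k; rw [mulVec_diagonal, mul_comm]
  have hquad : ∀ x : Fin d → ℝ, x ⬝ᵥ (G *ᵥ x)
      = (fun k => x k * w k) ⬝ᵥ (A *ᵥ fun k => x k * w k)
        + b * ((fun k => x k * w k) ⬝ᵥ (fun k => x k * w k)) := by
    intro x
    simp only [G, N]
    rw [← mulVec_mulVec, ← mulVec_mulVec, dotProduct_mulVec, ← mulVec_transpose,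
      diagonal_transpose, hdiag, add_mulVec, dotProduct_add, smul_mulVec, one_mulVec,
      dotProduct_smul, smul_eq_mul]
  have hNsymm : ∀ k l, N k l = N l k := by
    have : N.IsSymm := hsymm.add (isSymm_one.smul b)
    intro k l
    exact this.apply l k
  have hGapp : ∀ k l, G k l = w k * N k l * w l := by
    intro k l
    simp [G, mul_diagonal, diagonal_mul]
  have hG : G.PosSemidef := by
    refine PosSemidef.of_dotProduct_mulVec_nonneg ?_ ?_
    · ext k l
      simp only [conjTranspose_apply, star_trivial, hGapp]
      rw [hNsymm l k]; ring
    · intro x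
      rw [star_trivial, hquad]
      have := abs_le.1 (abs_quad_le hb hA (fun k => x k * w k))
      linarith
  have hw2 : ∀ k, w k ^ 2 ≤ R ^ 2 := fun k => sq_le_sq' (by linarith [(abs_le.1 (hw k)).1])
    (abs_le.1 (hw k)).2
  have hle : ∀ x : Fin d → ℝ, x ⬝ᵥ (G *ᵥ x) ≤ 1 / 4 * (x ⬝ᵥ x) := by
    intro x
    rw [hquad]
    have h1 := abs_le.1 (abs_quad_le hb hA (fun k => x k * w k))
    have h2 : ((fun k => x k * w k) ⬝ᵥ (fun k => x k * w k)) ≤ R ^ 2 * (x ⬝ᵥ x) := by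
      simp only [dotProduct, Finset.mul_sum]
      refine Finset.sum_le_sum fun k _ => ?_
      nlinarith [mul_le_mul_of_nonneg_left (hw2 k) (mul_self_nonneg (x k))]
    have h0 : 0 ≤ x ⬝ᵥ x := by simpa using dotProduct_star_self_nonneg x
    nlinarith [mul_le_mul_of_nonneg_left h2 hb, mul_le_mul_of_nonneg_right hbR h0]
  have htr : G.trace = ∑ k, (A k k * w k ^ 2 + b * w k ^ 2) := by
    simp only [trace, diag_apply, hGapp]
    refine Finset.sum_congr rfl fun k _ => ?_
    simp [N]; ring
  have hrow : ∀ k, ∑ l, N k l ^ 2 ≤ 4 * b ^ 2 := by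
    intro k
    have h1 := row_sq_sum_le hsymm hA k
    calc ∑ l, N k l ^ 2 ≤ ∑ l, (2 * A k l ^ 2 + 2 * (if k = l then b ^ 2 else 0)) := by
          refine Finset.sum_le_sum fun l _ => ?_
          by_cases h : k = l
          · subst h
            simp only [N, Matrix.add_apply, Matrix.smul_apply, one_apply_eq, smul_eq_mul, if_true]
            nlinarith [sq_nonneg (A k k - b)]
          · simp only [N, Matrix.add_apply, Matrix.smul_apply, one_apply_ne h, smul_eq_mul, if_neg h]
            nlinarith [sq_nonneg (A k l)]
      _ = 2 * ∑ l, A k l ^ 2 + 2 * b ^ 2 := by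
          rw [Finset.sum_add_distrib, ← Finset.mul_sum, ← Finset.mul_sum]
          simp
      _ ≤ _ := by linarith
  have htr2 : (G * G).trace ≤ ∑ k, 4 * b ^ 2 * w k ^ 4 := by
    calc (G * G).trace = ∑ k, ∑ l, w k ^ 2 * w l ^ 2 * N k l ^ 2 := by
          simp only [trace, diag_apply, mul_apply, hGapp]
          refine Finset.sum_congr rfl fun k _ => Finset.sum_congr rfl fun l _ => ?_
          rw [hNsymm l k]; ring
      _ ≤ ∑ k, ∑ l, (1 / 2 * (w k ^ 4 * N k l ^ 2) + 1 / 2 * (w l ^ 4 * N l k ^ 2)) := by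
          refine Finset.sum_le_sum fun k _ => Finset.sum_le_sum fun l _ => ?_
          rw [hNsymm l k]
          nlinarith [mul_nonneg (sq_nonneg (w k ^ 2 - w l ^ 2)) (sq_nonneg (N k l))]
      _ = ∑ k, ∑ l, w k ^ 4 * N k l ^ 2 := by
          simp only [Finset.sum_add_distrib, ← Finset.mul_sum]
          rw [Finset.sum_comm (f := fun k l => w l ^ 4 * N l k ^ 2)]
          simp only [← Finset.mul_sum]
          ring
      _ ≤ _ := by
          refine Finset.sum_le_sum fun k _ => ?_
          rw [← Finset.mul_sum]
          nlinarith [mul_le_mul_of_nonneg_left (hrow k) (by positivity : 0 ≤ w k ^ 4)]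
  have hshift : ∀ σ : Fin d → Bool,
      Real.exp ((fun k => boolSign (σ k) * w k) ⬝ᵥ (A *ᵥ fun k => boolSign (σ k) * w k))
        = Real.exp (-∑ k, b * w k ^ 2) * Real.exp
          ((fun k => boolSign (σ k)) ⬝ᵥ (G *ᵥ fun k => boolSign (σ k))) := by
    intro σ
    rw [hquad, ← Real.exp_add]
    congr 1
    have : (fun k => boolSign (σ k) * w k) ⬝ᵥ (fun k => boolSign (σ k) * w k)
        = ∑ k, w k ^ 2 := by
      refine Finset.sum_congr rfl fun k _ => ?_
      have := boolSign_sq (σ k)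
      linear_combination (w k ^ 2) * this
    rw [this, ← Finset.mul_sum]
    ring
  simp_rw [hshift]
  rw [← Finset.mul_sum, ← Real.exp_sum]
  calc _ ≤ Real.exp (-∑ k, b * w k ^ 2) * (2 ^ d * Real.exp (G.trace + 4 * (G * G).trace)) := by
        gcongr; exact sum_signs_exp_quad G hG hle
    _ = 2 ^ d * Real.exp (-∑ k, b * w k ^ 2 + (G.trace + 4 * (G * G).trace)) := by
        rw [Real.exp_add (-∑ k, b * w k ^ 2)]; ring
    _ ≤ _ := by
        gcongr
        have : ∑ k, 16 * b ^ 2 * w k ^ 4 = 4 * ∑ k, 4 * b ^ 2 * w k ^ 4 := by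
          rw [Finset.mul_sum]; exact Finset.sum_congr rfl fun k _ => by ring
        rw [htr, Finset.sum_add_distrib, Finset.sum_add_distrib, this]
        linarith

/-! ### Exponential moments of quadratic forms in bounded symmetric variables -/

/-- One coordinate: the variance of `a w² + 16 b² w⁴` is of order `b² R²`, not `b² R⁴`, because
`∫ w⁴ ≤ R² ∫ w²`. -/
lemma integral_exp_coord_le {η : Measure ℝ} [IsProbabilityMeasure η] {a b R : ℝ}
    (ha : |a| ≤ b) (hbR : 16 * (b * R ^ 2) ≤ 1)
    (hbd : ∀ᵐ x ∂η, |x| ≤ R) (h2 : ∫ x, x ^ 2 ∂η = 2) :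
    ∫ x, Real.exp (a * x ^ 2 + 16 * b ^ 2 * x ^ 4) ∂η
      ≤ Real.exp (2 * a + 40 * b ^ 2 * R ^ 2) := by
  have hb : 0 ≤ b := (abs_nonneg a).trans ha
  have hi2 : Integrable (fun x : ℝ => x ^ 2) η := by
    by_contra h
    rw [integral_undef h] at h2
    norm_num at h2
  have hpt : ∀ᵐ x ∂η, Real.exp (a * x ^ 2 + 16 * b ^ 2 * x ^ 4)
      ≤ 1 + (a + 20 * b ^ 2 * R ^ 2) * x ^ 2 := by
    filter_upwards [hbd] with x hx
    have hx2 : x ^ 2 ≤ R ^ 2 := sq_le_sq' (by linarith [(abs_le.1 hx).1]) (abs_le.1 hx).2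
    have hx0 : 0 ≤ x ^ 2 := sq_nonneg x
    have h4 : x ^ 4 ≤ R ^ 2 * x ^ 2 := by nlinarith [mul_le_mul_of_nonneg_right hx2 hx0]
    have hbx : 16 * (b * x ^ 2) ≤ 1 := by nlinarith [mul_le_mul_of_nonneg_left hx2 hb]
    set X := a * x ^ 2 + 16 * b ^ 2 * x ^ 4 with hX
    have ha1 := abs_le.1 ha
    have hbx0 : 0 ≤ b * x ^ 2 := by positivity
    have hq : 16 * b ^ 2 * x ^ 4 ≤ b * x ^ 2 := by nlinarith
    have hq0 : 0 ≤ 16 * b ^ 2 * x ^ 4 := by positivity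
    have hax := mul_le_mul_of_nonneg_right ha1.1 hx0
    have hax' := mul_le_mul_of_nonneg_right ha1.2 hx0
    have hXabs : |X| ≤ 2 * (b * x ^ 2) := abs_le.2 ⟨by linarith, by linarith⟩
    have he := Real.abs_exp_sub_one_sub_id_le (x := X) (by linarith)
    have hXsq : X ^ 2 ≤ (2 * (b * x ^ 2)) ^ 2 := sq_le_sq' (by linarith [(abs_le.1 hXabs).1])
      (abs_le.1 hXabs).2
    have hb4 : b ^ 2 * x ^ 4 ≤ b ^ 2 * (R ^ 2 * x ^ 2) := by gcongr
    have := (abs_le.1 he).2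
    nlinarith
  have hbound : Integrable (fun x : ℝ => 1 + (a + 20 * b ^ 2 * R ^ 2) * x ^ 2) η :=
    (integrable_const _).add (hi2.const_mul _)
  calc _ ≤ ∫ x, (1 + (a + 20 * b ^ 2 * R ^ 2) * x ^ 2) ∂η := by
        refine integral_mono_of_nonneg (Filter.Eventually.of_forall fun x => (Real.exp_pos _).le)
          hbound hpt
    _ = 1 + (a + 20 * b ^ 2 * R ^ 2) * 2 := by
        rw [integral_add (integrable_const _) (hi2.const_mul _), integral_const_mul, h2]
        simp
    _ ≤ Real.exp ((a + 20 * b ^ 2 * R ^ 2) * 2) := by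
        linarith [Real.add_one_le_exp ((a + 20 * b ^ 2 * R ^ 2) * 2)]
    _ = _ := by congr 1; ring

lemma measurable_quad {d : ℕ} (A : Matrix (Fin d) (Fin d) ℝ) :
    Measurable fun w : Fin d → ℝ => w ⬝ᵥ (A *ᵥ w) := by
  simp only [dotProduct, mulVec]
  fun_prop

lemma ae_pi_abs_le {d : ℕ} {η : Measure ℝ} [IsProbabilityMeasure η] {R : ℝ}
    (hbd : ∀ᵐ x ∂η, |x| ≤ R) :
    ∀ᵐ w ∂(Measure.pi fun _ : Fin d => η), ∀ k, |w k| ≤ R := by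
  rw [ae_all_iff]
  intro k
  exact (Measure.quasiMeasurePreserving_eval (fun _ : Fin d => η) k).ae hbd

lemma ae_exp_quad_le {d : ℕ} {η : Measure ℝ} [IsProbabilityMeasure η]
    {A : Matrix (Fin d) (Fin d) ℝ} {b R : ℝ}
    (hb : 0 ≤ b) (hA : ∀ x, (A *ᵥ x) ⬝ᵥ (A *ᵥ x) ≤ b ^ 2 * (x ⬝ᵥ x))
    (hbd : ∀ᵐ x ∂η, |x| ≤ R) :
    ∀ᵐ w ∂(Measure.pi fun _ : Fin d => η),
      ‖Real.exp (w ⬝ᵥ (A *ᵥ w))‖ ≤ Real.exp (b * (d * R ^ 2)) := by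
  filter_upwards [ae_pi_abs_le hbd] with w hw
  rw [Real.norm_eq_abs, Real.abs_exp, Real.exp_le_exp]
  refine (le_abs_self _).trans ((abs_quad_le hb hA w).trans ?_)
  gcongr
  have : ∀ k ∈ Finset.univ, w k * w k ≤ R ^ 2 := fun k _ => by
    rw [← sq]
    exact sq_le_sq' (by linarith [(abs_le.1 (hw k)).1]) (abs_le.1 (hw k)).2
  simpa [dotProduct] using Finset.sum_le_card_nsmul _ _ _ this

lemma integrable_exp_quad {d : ℕ} {η : Measure ℝ} [IsProbabilityMeasure η]
    {A : Matrix (Fin d) (Fin d) ℝ} {b R : ℝ}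
    (hb : 0 ≤ b) (hA : ∀ x, (A *ᵥ x) ⬝ᵥ (A *ᵥ x) ≤ b ^ 2 * (x ⬝ᵥ x))
    (hbd : ∀ᵐ x ∂η, |x| ≤ R) :
    Integrable (fun w : Fin d → ℝ => Real.exp (w ⬝ᵥ (A *ᵥ w)))
      (Measure.pi fun _ : Fin d => η) :=
  Integrable.of_bound (measurable_quad A).exp.aestronglyMeasurable _ (ae_exp_quad_le hb hA hbd)

/-- Exponential moment bound for a quadratic form in independent symmetric bounded variables of
variance `2`. By symmetry the integrand may be averaged over all coordinatewise sign changes. -/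
lemma integral_exp_quad_le {d : ℕ} {η : Measure ℝ} [IsProbabilityMeasure η]
    (hneg : MeasurePreserving (fun x : ℝ => -x) η η)
    {A : Matrix (Fin d) (Fin d) ℝ} (hsymm : A.IsSymm) {b R : ℝ}
    (hb : 0 ≤ b) (hA : ∀ x, (A *ᵥ x) ⬝ᵥ (A *ᵥ x) ≤ b ^ 2 * (x ⬝ᵥ x))
    (hbR : 16 * (b * R ^ 2) ≤ 1)
    (hbd : ∀ᵐ x ∂η, |x| ≤ R) (h2 : ∫ x, x ^ 2 ∂η = 2) :
    ∫ w : Fin d → ℝ, Real.exp (w ⬝ᵥ (A *ᵥ w)) ∂(Measure.pi fun _ : Fin d => η)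
      ≤ Real.exp (2 * A.trace + 40 * b ^ 2 * R ^ 2 * d) := by
  let P := Measure.pi fun _ : Fin d => η
  let F : (Fin d → ℝ) → ℝ := fun w => Real.exp (w ⬝ᵥ (A *ᵥ w))
  have hFm : Measurable F := (measurable_quad A).exp
  have hFi : Integrable F P := integrable_exp_quad hb hA hbd
  have hmp : ∀ σ : Fin d → Bool,
      MeasurePreserving (fun (w : Fin d → ℝ) k => boolSign (σ k) * w k) P P := by
    intro σ
    refine measurePreserving_pi (fun _ => η) (fun _ => η)
      (f := fun k x => boolSign (σ k) * x) fun k => ?_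
    cases σ k
    · simpa [boolSign] using hneg
    · simpa [boolSign, Function.id_def] using MeasurePreserving.id η
  have hσ : ∀ σ : Fin d → Bool, ∫ w, F (fun k => boolSign (σ k) * w k) ∂P = ∫ w, F w ∂P := by
    intro σ
    have := integral_map (μ := P) (hmp σ).measurable.aemeasurable (f := F)
      hFm.aestronglyMeasurable
    rw [(hmp σ).map_eq] at this
    exact this.symm
  have hσi : ∀ σ : Fin d → Bool, Integrable (fun w => F (fun k => boolSign (σ k) * w k)) P :=
    fun σ => (hmp σ).integrable_comp_of_integrable hFi
  let f : Fin d → ℝ → ℝ := fun k x => Real.exp (A k k * x ^ 2 + 16 * b ^ 2 * x ^ 4)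
  have hfi : ∀ k, Integrable (f k) η := by
    intro k
    refine Integrable.of_bound (C := Real.exp (b * R ^ 2 + 16 * b ^ 2 * R ^ 4))
      (by simp only [f]; fun_prop) ?_
    filter_upwards [hbd] with x hx
    rw [Real.norm_eq_abs, Real.abs_exp, Real.exp_le_exp]
    have hx2 : x ^ 2 ≤ R ^ 2 := sq_le_sq' (by linarith [(abs_le.1 hx).1]) (abs_le.1 hx).2
    have h4 : x ^ 4 ≤ R ^ 4 := by nlinarith [sq_nonneg x]
    have ha := (abs_le.1 (abs_diag_le hb hA k)).2
    gcongr
  have hsum : (2 : ℝ) ^ d * ∫ w, F w ∂P ≤ 2 ^ d * ∏ k, ∫ x, f k x ∂η := by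
    calc (2 : ℝ) ^ d * ∫ w, F w ∂P
        = ∑ σ : Fin d → Bool, ∫ w, F (fun k => boolSign (σ k) * w k) ∂P := by
          simp [hσ]
      _ = ∫ w, ∑ σ : Fin d → Bool, F (fun k => boolSign (σ k) * w k) ∂P :=
          (integral_finsetSum _ fun σ _ => hσi σ).symm
      _ ≤ ∫ w, 2 ^ d * ∏ k, f k (w k) ∂P := by
          refine integral_mono_ae (integrable_finsetSum _ fun σ _ => hσi σ)
            ((Integrable.fintype_prod hfi).const_mul _) ?_
          filter_upwards [ae_pi_abs_le hbd] with w hw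
          exact sum_signs_exp_weighted hsymm hb hA hbR hw
      _ = _ := by
          rw [integral_const_mul, integral_fintype_prod_eq_prod f]
  have hle := le_of_mul_le_mul_left hsum (by positivity)
  refine hle.trans ?_
  calc ∏ k, ∫ x, f k x ∂η ≤ ∏ k, Real.exp (2 * A k k + 40 * b ^ 2 * R ^ 2) := by
        refine Finset.prod_le_prod (fun k _ => integral_nonneg fun x => (Real.exp_pos _).le)
          fun k _ => integral_exp_coord_le (abs_diag_le hb hA k) hbR hbd h2
    _ = _ := by
        rw [← Real.exp_sum, Finset.sum_add_distrib, ← Finset.mul_sum]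
        congr 1
        simp [trace]
        ring

lemma quad_tail_le {d : ℕ} {η : Measure ℝ} [IsProbabilityMeasure η]
    (hneg : MeasurePreserving (fun x : ℝ => -x) η η)
    {A : Matrix (Fin d) (Fin d) ℝ} (hsymm : A.IsSymm) {b R : ℝ}
    (hb : 0 ≤ b) (hA : ∀ x, (A *ᵥ x) ⬝ᵥ (A *ᵥ x) ≤ b ^ 2 * (x ⬝ᵥ x))
    (hbR : 16 * (b * R ^ 2) ≤ 1)
    (hbd : ∀ᵐ x ∂η, |x| ≤ R) (h2 : ∫ x, x ^ 2 ∂η = 2) (τ : ℝ) :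
    (Measure.pi fun _ : Fin d => η) {w | τ + 2 * A.trace ≤ w ⬝ᵥ (A *ᵥ w)}
      ≤ ENNReal.ofReal (Real.exp (-τ + 40 * b ^ 2 * R ^ 2 * d)) := by
  have h := ProbabilityTheory.measure_ge_le_exp_mul_mgf
    (μ := Measure.pi fun _ : Fin d => η) (X := fun w : Fin d → ℝ => w ⬝ᵥ (A *ᵥ w)) (t := 1)
    (τ + 2 * A.trace) zero_le_one (by simpa using integrable_exp_quad hb hA hbd)
  rw [← ofReal_measureReal]
  refine ENNReal.ofReal_le_ofReal (h.trans ?_)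
  simp only [ProbabilityTheory.mgf, one_mul]
  calc _ ≤ Real.exp (-1 * (τ + 2 * A.trace))
        * Real.exp (2 * A.trace + 40 * b ^ 2 * R ^ 2 * d) := by
        gcongr
        exact integral_exp_quad_le hneg hsymm hb hA hbR hbd h2
    _ = _ := by
        rw [← Real.exp_add]; congr 1; ring

/-! ### The law of the difference of two samples -/

/-- The law of the difference of two independent copies of `ν`. -/
noncomputable def diffLaw (ν : Measure ℝ) : Measure ℝ :=
  (ν.prod ν).map fun p => p.1 - p.2

instance (ν : Measure ℝ) [IsProbabilityMeasure ν] : IsProbabilityMeasure (diffLaw ν) :=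
  Measure.isProbabilityMeasure_map (by fun_prop)

lemma measurePreserving_neg_diffLaw (ν : Measure ℝ) [IsProbabilityMeasure ν] :
    MeasurePreserving (fun x : ℝ => -x) (diffLaw ν) (diffLaw ν) := by
  refine ⟨measurable_neg, ?_⟩
  have hs := (Measure.measurePreserving_swap (μ := ν) (ν := ν)).map_eq
  rw [diffLaw, Measure.map_map measurable_neg (by fun_prop)]
  nth_rewrite 2 [← hs]
  rw [Measure.map_map (by fun_prop) measurable_swap]
  congr 1
  ext p
  simp

lemma diffLaw_ae_abs_le {ν : Measure ℝ} [IsProbabilityMeasure ν] {K : ℝ}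
    (h : ∀ᵐ z ∂ν, |z| ≤ K) : ∀ᵐ x ∂(diffLaw ν), |x| ≤ 2 * K := by
  rw [diffLaw, ae_map_iff (by fun_prop) (measurableSet_le (by fun_prop) (by fun_prop))]
  filter_upwards [Measure.quasiMeasurePreserving_fst.ae h, Measure.quasiMeasurePreserving_snd.ae h]
    with p h1 h2
  have h3 := abs_sub p.1 p.2
  linarith

lemma integral_sq_diffLaw {ν : Measure ℝ} [IsProbabilityMeasure ν] {K : ℝ}
    (h : ∀ᵐ z ∂ν, |z| ≤ K) (h1 : ∫ z, z ∂ν = 0) (h2 : ∫ z, z ^ 2 ∂ν = 1) :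
    ∫ x, x ^ 2 ∂(diffLaw ν) = 2 := by
  have hi1 : Integrable (fun z : ℝ => z) ν := Integrable.of_bound (by fun_prop) K h
  have hi2 : Integrable (fun z : ℝ => z ^ 2) ν := by
    by_contra hc
    rw [integral_undef hc] at h2
    norm_num at h2
  have e1 : Integrable (fun p : ℝ × ℝ => p.1 ^ 2) (ν.prod ν) := hi2.comp_fst ν
  have e2 : Integrable (fun p : ℝ × ℝ => p.2 ^ 2) (ν.prod ν) := hi2.comp_snd ν
  have e3 : Integrable (fun p : ℝ × ℝ => p.1 * p.2) (ν.prod ν) := hi1.mul_prod hi1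
  rw [diffLaw, integral_map (by fun_prop) (by fun_prop)]
  have : ∀ p : ℝ × ℝ, (p.1 - p.2) ^ 2 = p.1 ^ 2 + p.2 ^ 2 - 2 * (p.1 * p.2) := fun p => by ring
  simp_rw [this]
  rw [integral_sub (f := fun p : ℝ × ℝ => p.1 ^ 2 + p.2 ^ 2) (e1.add e2) (e3.const_mul 2),
    integral_add e1 e2, integral_const_mul,
    integral_prod_mul (fun x : ℝ => x) (fun x : ℝ => x), h1,
    integral_fun_fst (fun x : ℝ => x ^ 2), integral_fun_snd (fun x : ℝ => x ^ 2), h2]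
  simp
  norm_num

lemma map_sub_pi (ν : Measure ℝ) [IsProbabilityMeasure ν] (d : ℕ) :
    ((Measure.pi fun _ : Fin d => ν).prod (Measure.pi fun _ : Fin d => ν)).map
      (fun p => p.1 - p.2) = Measure.pi fun _ : Fin d => diffLaw ν := by
  have h := (measurePreserving_arrowProdEquivProdArrow ℝ ℝ (Fin d) (fun _ => ν)
    (fun _ => ν)).map_eq
  rw [← h, Measure.map_map (by fun_prop) (MeasurableEquiv.measurable _)]
  have := Measure.pi_map_pi (μ := fun _ : Fin d => ν.prod ν)
    (f := fun _ (p : ℝ × ℝ) => p.1 - p.2) (fun _ => by fun_prop)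
  simp only [diffLaw]
  rw [← this]
  rfl

lemma map_sub_pi_pi (ν : Measure ℝ) [IsProbabilityMeasure ν] {n d : ℕ} {i j : Fin n}
    (hij : i ≠ j) :
    (Measure.pi fun _ : Fin n => (Measure.pi fun _ : Fin d => ν)).map (fun z => z i - z j)
      = Measure.pi fun _ : Fin d => diffLaw ν := by
  have hind := ProbabilityTheory.iIndepFun_pi
    (μ := fun _ : Fin n => (Measure.pi fun _ : Fin d => ν))
    (X := fun _ (x : Fin d → ℝ) => x) (fun _ => by fun_prop)
  have h2 := (ProbabilityTheory.indepFun_iff_map_prod_eq_prod_map_map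
    (measurable_pi_apply i).aemeasurable (measurable_pi_apply j).aemeasurable).1 (hind.indepFun hij)
  have hev : ∀ k : Fin n, (Measure.pi fun _ : Fin n => (Measure.pi fun _ : Fin d => ν)).map
      (fun z => z k) = Measure.pi fun _ : Fin d => ν := fun k =>
    (measurePreserving_eval (fun _ : Fin n => (Measure.pi fun _ : Fin d => ν)) k).map_eq
  rw [hev, hev] at h2
  rw [← map_sub_pi, ← h2, Measure.map_map (by fun_prop) (by fun_prop)]
  rfl

/-! ### Tail bound for one pair and choice of parameters -/

lemma mulVec_sq_le_of_opNorm {d : ℕ} {S : Matrix (Fin d) (Fin d) ℝ} {L : ℝ} (h : opNorm S ≤ L)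
    (x : Fin d → ℝ) : (S *ᵥ x) ⬝ᵥ (S *ᵥ x) ≤ L ^ 2 * (x ⬝ᵥ x) := by
  have h1 := ((Matrix.toEuclideanCLM (𝕜 := ℝ) S).le_opNorm (WithLp.toLp 2 x)).trans
    (mul_le_mul_of_nonneg_right h (norm_nonneg _))
  have h2 := pow_le_pow_left₀ (norm_nonneg _) h1 2
  rw [mul_pow, EuclideanSpace.real_norm_sq_eq, EuclideanSpace.real_norm_sq_eq] at h2
  simpa [dotProduct, sq] using h2

/-- Two-sided tail bound for one pair, by the exponential Markov inequality with parameter `lam`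
applied to `lam • S` and `-lam • S`. -/
lemma quad_abs_tail_le {d : ℕ} {η : Measure ℝ} [IsProbabilityMeasure η]
    (hneg : MeasurePreserving (fun x : ℝ => -x) η η)
    {S : Matrix (Fin d) (Fin d) ℝ} (hsymm : S.IsSymm) {L R lam : ℝ} (hL : 0 ≤ L) (hlam : 0 ≤ lam)
    (hS : ∀ x, (S *ᵥ x) ⬝ᵥ (S *ᵥ x) ≤ L ^ 2 * (x ⬝ᵥ x))
    (hbR : 16 * (lam * L * R ^ 2) ≤ 1)
    (hbd : ∀ᵐ x ∂η, |x| ≤ R) (h2 : ∫ x, x ^ 2 ∂η = 2) (t : ℝ) :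
    (Measure.pi fun _ : Fin d => η) {w | t ≤ |w ⬝ᵥ (S *ᵥ w) - 2 * S.trace|}
      ≤ 2 * ENNReal.ofReal (Real.exp (-(lam * t) + 40 * (lam * L) ^ 2 * R ^ 2 * d)) := by
  have hone : ∀ c : ℝ, |c| = lam →
      (Measure.pi fun _ : Fin d => η)
        {w | lam * t + 2 * (c • S).trace ≤ w ⬝ᵥ ((c • S) *ᵥ w)}
      ≤ ENNReal.ofReal (Real.exp (-(lam * t) + 40 * (lam * L) ^ 2 * R ^ 2 * d)) := by
    intro c hc
    refine quad_tail_le hneg (hsymm.smul c) (by positivity) ?_ hbR hbd h2 _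
    intro x
    rw [smul_mulVec, smul_dotProduct, dotProduct_smul, smul_eq_mul, smul_eq_mul, ← hc, mul_pow,
      sq_abs]
    nlinarith [mul_le_mul_of_nonneg_left (hS x) (sq_nonneg c)]
  refine (measure_mono (t := {w | lam * t + 2 * (lam • S).trace ≤ w ⬝ᵥ ((lam • S) *ᵥ w)} ∪
    {w | lam * t + 2 * ((-lam) • S).trace ≤ w ⬝ᵥ (((-lam) • S) *ᵥ w)}) ?_).trans
    ((measure_union_le _ _).trans ?_)
  · intro w hw
    simp only [Set.mem_ofPred_eq, Set.mem_union, smul_mulVec, dotProduct_smul, smul_eq_mul,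
      trace_smul] at hw ⊢
    rcases le_abs.1 hw with h | h
    · left; nlinarith [mul_le_mul_of_nonneg_left h hlam]
    · right; nlinarith [mul_le_mul_of_nonneg_left h hlam]
  · rw [two_mul (ENNReal.ofReal _)]
    exact add_le_add (hone lam (abs_of_nonneg hlam))
      (hone (-lam) (by rw [abs_neg, abs_of_nonneg hlam]))

/-- With `lam = x ^ (-1/2 - α) * (log x) ^ (1/2)` and entries bounded by `R = 2 C x ^ α`, the
exponential moment bound is applicable as soon as `x` is large. -/
lemma param_small {x C L α : ℝ} (hx : 1 < x) (hα : α ≤ 1 / 4) (hL : 0 ≤ L)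
    (h : 64 * C ^ 2 * L * Real.log x ^ (1 / 2 : ℝ) ≤ x ^ (1 / 4 : ℝ)) :
    16 * ((x ^ (-(1 / 2) - α) * Real.log x ^ (1 / 2 : ℝ)) * L * (2 * (C * x ^ α)) ^ 2) ≤ 1 := by
  have hx0 : 0 < x := by linarith
  have hl : 0 ≤ Real.log x := (Real.log_pos hx).le
  have e1 : x ^ (-(1 / 2) - α) * (x ^ α) ^ 2 ≤ x ^ (-(1 / 4) : ℝ) := by
    rw [← Real.rpow_natCast, ← Real.rpow_mul hx0.le, ← Real.rpow_add hx0]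
    exact Real.rpow_le_rpow_of_exponent_le hx.le (by push_cast; linarith)
  have e2 : x ^ (1 / 4 : ℝ) * x ^ (-(1 / 4) : ℝ) = 1 := by
    rw [← Real.rpow_add hx0]; norm_num
  have hc : 0 ≤ 64 * C ^ 2 * L * Real.log x ^ (1 / 2 : ℝ) := by positivity
  calc _ = 64 * C ^ 2 * L * Real.log x ^ (1 / 2 : ℝ) * (x ^ (-(1 / 2) - α) * (x ^ α) ^ 2) := by ring
    _ ≤ x ^ (1 / 4 : ℝ) * x ^ (-(1 / 4) : ℝ) := by gcongr
    _ = 1 := e2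

/-- The choice of `lam` in `param_small` makes the linear term of the exponent equal to
`4 * log x ^ (1 + ε / 2)` and the quadratic one a constant multiple of `log x`; so the tail is at
most `x ^ (-6)` for large `x`, which survives a union bound over `O(x²)` pairs. -/
lemma param_exponent {x C L α ε : ℝ} (hx : 1 < x)
    (h : 6 + 160 * L ^ 2 * C ^ 2 ≤ 4 * Real.log x ^ (ε / 2)) :
    -((x ^ (-(1 / 2) - α) * Real.log x ^ (1 / 2 : ℝ)) *
        (x * (4 * x ^ (-(1 / 2 - α)) * Real.log x ^ ((1 + ε) / 2))))
      + 40 * ((x ^ (-(1 / 2) - α) * Real.log x ^ (1 / 2 : ℝ)) * L) ^ 2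
        * (2 * (C * x ^ α)) ^ 2 * x ≤ -(6 * Real.log x) := by
  have hx0 : 0 < x := by linarith
  have hl : 0 < Real.log x := Real.log_pos hx
  have e1 : x ^ (-(1 / 2) - α) * (x * x ^ (-(1 / 2 - α))) = 1 := by
    nth_rewrite 2 [← Real.rpow_one x]
    rw [← Real.rpow_add hx0, ← Real.rpow_add hx0]
    ring_nf
    simp
  have e2 : (x ^ (-(1 / 2) - α)) ^ 2 * (x ^ α) ^ 2 * x = 1 := by
    nth_rewrite 3 [← Real.rpow_one x]
    rw [← Real.rpow_natCast, ← Real.rpow_natCast, ← Real.rpow_mul hx0.le, ← Real.rpow_mul hx0.le,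
      ← Real.rpow_add hx0, ← Real.rpow_add hx0]
    push_cast
    ring_nf
    simp
  have e3 : Real.log x ^ (1 / 2 : ℝ) * Real.log x ^ ((1 + ε) / 2)
      = Real.log x * Real.log x ^ (ε / 2) := by
    nth_rewrite 3 [← Real.rpow_one (Real.log x)]
    rw [← Real.rpow_add hl, ← Real.rpow_add hl]
    congr 1; ring
  have e4 : (Real.log x ^ (1 / 2 : ℝ)) ^ 2 = Real.log x := by
    rw [← Real.rpow_natCast, ← Real.rpow_mul hl.le]; norm_num
  calc _ = -(4 * (x ^ (-(1 / 2) - α) * (x * x ^ (-(1 / 2 - α))))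
          * (Real.log x ^ (1 / 2 : ℝ) * Real.log x ^ ((1 + ε) / 2)))
        + 160 * L ^ 2 * C ^ 2 * (Real.log x ^ (1 / 2 : ℝ)) ^ 2
          * ((x ^ (-(1 / 2) - α)) ^ 2 * (x ^ α) ^ 2 * x) := by ring
    _ = Real.log x * (160 * L ^ 2 * C ^ 2 - 4 * Real.log x ^ (ε / 2)) := by
        rw [e1, e2, e3, e4]; ring
    _ ≤ _ := by nlinarith

lemma eventually_params (C L ζ : ℝ) {ε : ℝ} (hε : 0 < ε) (hC : 0 < C) (hL : 0 < L) :
    ∀ᶠ d : ℕ in Filter.atTop, 1 < (d : ℝ) ∧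
      64 * C ^ 2 * L * Real.log d ^ (1 / 2 : ℝ) ≤ (d : ℝ) ^ (1 / 4 : ℝ) ∧
      6 + 160 * L ^ 2 * C ^ 2 ≤ 4 * Real.log d ^ (ε / 2) ∧ 2 * ζ ^ 2 ≤ (d : ℝ) ^ 2 := by
  refine tendsto_natCast_atTop_atTop.eventually (p := fun x : ℝ => 1 < x ∧
      64 * C ^ 2 * L * Real.log x ^ (1 / 2 : ℝ) ≤ x ^ (1 / 4 : ℝ) ∧
      6 + 160 * L ^ 2 * C ^ 2 ≤ 4 * Real.log x ^ (ε / 2) ∧ 2 * ζ ^ 2 ≤ x ^ 2) ?_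
  have h1 := (isLittleO_log_rpow_rpow_atTop (1 / 2) (by norm_num : (0 : ℝ) < 1 / 4)).bound
    (by positivity : 0 < (64 * C ^ 2 * L)⁻¹)
  have h2 := ((tendsto_rpow_atTop (half_pos hε)).comp Real.tendsto_log_atTop).eventually_ge_atTop
    (6 + 160 * L ^ 2 * C ^ 2)
  have h3 := (Filter.tendsto_pow_atTop (α := ℝ) (two_ne_zero)).eventually_ge_atTop (2 * ζ ^ 2)
  filter_upwards [Filter.eventually_gt_atTop 1, h1, h2, h3] with x hx h1 h2 h3
  refine ⟨hx, ?_, ?_, h3⟩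
  · have hl : 0 ≤ Real.log x := (Real.log_pos hx).le
    rw [Real.norm_of_nonneg (by positivity), Real.norm_of_nonneg (by positivity)] at h1
    have hpos : 0 < 64 * C ^ 2 * L := by positivity
    rwa [← div_eq_inv_mul, le_div_iff₀' hpos] at h1
  · simp only [Function.comp_apply] at h2
    have : 0 ≤ Real.log x ^ (ε / 2) := by
      have hl : 0 ≤ Real.log x := (Real.log_pos hx).le
      positivity
    linarith

/-! ### Union bound over the pairs -/

/-- **Concentration of pairwise quadratic forms (Lemma A.2).** -/
theorem stmt_6 (C₀ C₁ ζmax m ε₀ : ℝ) (hm : 0 ≤ m) (hε₀ : 0 < ε₀) :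
    ∃ D : ℕ, ∀ d : ℕ, D ≤ d → ∀ n : ℕ, (n : ℝ) ≤ ζmax * d →
      ∀ ν : Measure ℝ, IsProbabilityMeasure ν →
        (∫ z, z ∂ν) = 0 → (∫ z, z ^ 2 ∂ν) = 1 →
        (∀ᵐ z ∂ν, |z| ≤ C₀ * (d : ℝ) ^ ((2 : ℝ) / (8 + m))) →
      ∀ S : Matrix (Fin d) (Fin d) ℝ, S.PosSemidef → opNorm S ≤ C₁ →
      ENNReal.ofReal (1 - 1 / (d : ℝ) ^ 2) ≤
        (Measure.pi fun _ : Fin n => (Measure.pi fun _ : Fin d => ν))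
          {z | ∀ i j : Fin n, i ≠ j →
            |((z i - z j) ⬝ᵥ (S *ᵥ (z i - z j))) / d - 2 * S.trace / d|
              ≤ 4 * (d : ℝ) ^ (-(1 / 2 - 2 / (8 + m)))
                  * Real.log d ^ ((1 + ε₀) / 2)} := by
  have hC : 0 < max C₀ 1 := lt_max_of_lt_right one_pos
  have hL : 0 < max C₁ 1 := lt_max_of_lt_right one_pos
  obtain ⟨D, hD⟩ := Filter.eventually_atTop.1
    (eventually_params (max C₀ 1) (max C₁ 1) ζmax hε₀ hC hL)
  refine ⟨D, fun d hd n hn ν hν h1 h2 hbd S hS hSn => ?_⟩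
  obtain ⟨hd1, hp1, hp2, hp3⟩ := hD d hd
  set C := max C₀ 1
  set L := max C₁ 1
  set α : ℝ := 2 / (8 + m) with hα
  have hα4 : α ≤ 1 / 4 := by
    rw [hα, div_le_div_iff₀ (by linarith) (by norm_num)]; linarith
  have hd0 : (0 : ℝ) < d := by linarith
  have hl : 0 ≤ Real.log d := (Real.log_pos hd1).le
  have hbdC : ∀ᵐ z ∂ν, |z| ≤ C * (d : ℝ) ^ α := by
    filter_upwards [hbd] with z hz
    refine hz.trans ?_
    gcongr
    exact le_max_left _ _
  set T : ℝ := 4 * (d : ℝ) ^ (-(1 / 2 - α)) * Real.log d ^ ((1 + ε₀) / 2) with hT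
  set P := Measure.pi fun _ : Fin n => (Measure.pi fun _ : Fin d => ν) with hP
  let lam : ℝ := (d : ℝ) ^ (-(1 / 2) - α) * Real.log d ^ (1 / 2 : ℝ)
  have hlam : 0 ≤ lam := by positivity
  let bad : Set (Fin d → ℝ) := {w | d * T ≤ |w ⬝ᵥ (S *ᵥ w) - 2 * S.trace|}
  have hbadm : MeasurableSet bad :=
    measurableSet_le measurable_const ((measurable_quad S).sub_const _).abs
  have hSsymm : S.IsSymm := by
    have := hS.1.eq
    rwa [conjTranspose_eq_transpose_of_trivial] at this
  have htail : (Measure.pi fun _ : Fin d => diffLaw ν) bad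
      ≤ ENNReal.ofReal (2 * ((d : ℝ) ^ 6)⁻¹) := by
    refine (quad_abs_tail_le (measurePreserving_neg_diffLaw ν) hSsymm hL.le hlam
      (mulVec_sq_le_of_opNorm (hSn.trans (le_max_left _ _)))
      (param_small hd1 hα4 hL.le hp1) (diffLaw_ae_abs_le hbdC)
      (integral_sq_diffLaw hbdC h1 h2) (d * T)).trans ?_
    rw [ENNReal.ofReal_mul (by norm_num), ENNReal.ofReal_ofNat]
    gcongr
    refine (Real.exp_le_exp.2 (param_exponent hd1 hp2)).trans_eq ?_
    rw [Real.exp_neg, mul_comm, Real.exp_mul, Real.exp_log hd0]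
    norm_num
  have hpair : ∀ i j : Fin n, i ≠ j → P {z | z i - z j ∈ bad}
      ≤ ENNReal.ofReal (2 * ((d : ℝ) ^ 6)⁻¹) := by
    intro i j hij
    have h := map_sub_pi_pi ν (d := d) hij
    have hmeas : Measurable fun z : Fin n → Fin d → ℝ => z i - z j :=
      (measurable_pi_apply i).sub (measurable_pi_apply j)
    rw [← h, Measure.map_apply hmeas hbadm] at htail
    exact htail
  let B : Fin n → Fin n → Set (Fin n → Fin d → ℝ) := fun i j => {z | i ≠ j ∧ z i - z j ∈ bad}
  have hB : ∀ i j, P (B i j) ≤ ENNReal.ofReal (2 * ((d : ℝ) ^ 6)⁻¹) := by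
    intro i j
    by_cases hij : i = j
    · simp [B, hij]
    · exact (measure_mono fun z hz => hz.2).trans (hpair i j hij)
  have hbadall : P (⋃ i, ⋃ j, B i j) ≤ ENNReal.ofReal (1 / (d : ℝ) ^ 2) := by
    calc P (⋃ i, ⋃ j, B i j) ≤ ∑ i, ∑ j, P (B i j) :=
          (measure_iUnion_fintype_le _ _).trans
            (Finset.sum_le_sum fun i _ => measure_iUnion_fintype_le _ _)
      _ ≤ ∑ _i : Fin n, ∑ _j : Fin n, ENNReal.ofReal (2 * ((d : ℝ) ^ 6)⁻¹) :=
          Finset.sum_le_sum fun i _ => Finset.sum_le_sum fun j _ => hB i j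
      _ = ENNReal.ofReal (n * (n * (2 * ((d : ℝ) ^ 6)⁻¹))) := by
          rw [ENNReal.ofReal_mul (by positivity), ENNReal.ofReal_mul (by positivity)]
          simp
      _ ≤ _ := by
          refine ENNReal.ofReal_le_ofReal ?_
          have hn2 : (n : ℝ) ^ 2 ≤ (ζmax * d) ^ 2 := by gcongr
          rw [le_div_iff₀ (by positivity)]
          calc (n : ℝ) * (n * (2 * ((d : ℝ) ^ 6)⁻¹)) * d ^ 2
              = (n : ℝ) ^ 2 * (2 * d ^ 2 * ((d : ℝ) ^ 6)⁻¹) := by ring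
            _ ≤ (ζmax * d) ^ 2 * (2 * d ^ 2 * ((d : ℝ) ^ 6)⁻¹) := by gcongr
            _ = 2 * ζmax ^ 2 * ((d : ℝ) ^ 2)⁻¹ := by field_simp
            _ ≤ d ^ 2 * ((d : ℝ) ^ 2)⁻¹ := by gcongr
            _ = 1 := mul_inv_cancel₀ (by positivity)
  set good := {z : Fin n → Fin d → ℝ | ∀ i j : Fin n, i ≠ j →
            |((z i - z j) ⬝ᵥ (S *ᵥ (z i - z j))) / d - 2 * S.trace / d| ≤ T} with hgood
  have hcover : (Set.univ : Set (Fin n → Fin d → ℝ)) ⊆ good ∪ ⋃ i, ⋃ j, B i j := by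
    intro z _
    by_cases hz : z ∈ good
    · exact Or.inl hz
    · right
      simp only [hgood, Set.mem_ofPred_eq, not_forall, not_le] at hz
      obtain ⟨i, j, hij, hlt⟩ := hz
      refine Set.mem_iUnion.2 ⟨i, Set.mem_iUnion.2 ⟨j, hij, ?_⟩⟩
      rw [← sub_div, abs_div, abs_of_pos hd0, lt_div_iff₀ hd0] at hlt
      change (d : ℝ) * T ≤ _
      linarith
  have hsum : (1 : ENNReal) ≤ P good + ENNReal.ofReal (1 / (d : ℝ) ^ 2) := by
    calc (1 : ENNReal) = P Set.univ := measure_univ.symm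
      _ ≤ P (good ∪ ⋃ i, ⋃ j, B i j) := measure_mono hcover
      _ ≤ _ := (measure_union_le _ _).trans (by gcongr)
  rw [ENNReal.ofReal_sub _ (by positivity), ENNReal.ofReal_one]
  exact tsub_le_iff_right.2 hsum
end

section
/- Weighted interpolation (projection) bias bound (Part (A) of the proof of Theorem 4.5): Let x_1,…,x_n be i.i.d. from p, let q ≪ p with w := dq/dp ≤ W_max, let ψ : ℝ^d → H₀ satisfy K(x,x′) = ⟨ψ(x), ψ(x′)⟩ with κ := sup_x K(x,x) < ∞, and set K := (K(x_i,x_j))_{i,j} and W := diag(w(x_1),…,w(x_n)). Then for every δ ∈ (0,1), with probability at least 1 − 2nδ over the sample, ∫ dist_{H₀}(ψ(x), span{ψ(x_1),…,ψ(x_n)})² dq(x) ≤ min_{0 ≤ k ≤ n} { (1/n) Σ_{j>k} λ_j(K W) + 2 √(k/n) · ( Σ_{i=1}^n w(x_i)² K(x_i,x_i)² / n )^{1/2} + 3 κ W_max √(log(1/δ)/(2n)) }, where λ_1(KW) ≥ … ≥ λ_n(KW) are the eigenvalues of K W (equal to those of W^{1/2} K W^{1/2}). -/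
/-!
For a frame `u` of `k` pairwise orthogonal vectors of norm at most one, all lying in the span of the
features `ψ(xᵢ)`, the squared distance from `ψ(x)` to that span is at most
`residSq u (ψ x) = ‖ψ x‖² - ∑ⱼ ⟪uⱼ, ψ x⟫²`. Choosing for `u` the normalised lifts of `k` eigenvectors
of `W^{1/2} K W^{1/2}` makes the weighted sample sum of these residuals equal to the sum of the
remaining eigenvalues (`exists_frame_of_eigenvalues`). Since `q` has density `w` with respect to `p`,
it remains to compare the `p`-mean of `w · residSq u ∘ ψ` with its sample mean, uniformly over all
frames, because this `u` depends on the sample.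

That comparison is `uniform_deviation`: symmetrisation with a ghost sample bounds the expected
uniform deviation by twice the expected Rademacher complexity, and McDiarmid's inequality applied to
the deviation minus twice the empirical complexity yields the term with constant `3`. The empirical
complexity is at most `√k (∑ᵢ w(xᵢ)² K(xᵢ, xᵢ)²)^{1/2}` before division by `n`
(`radSum_residSq_le`), because in `H ⊗ H` the residual is an affine function of `∑ⱼ uⱼ ⊗ uⱼ`, a tensor of
norm at most `√k`. Suprema over frames are taken along a dense sequence, which keeps them
measurable, and a union bound over `k = 0, …, n` finishes the proof.
-/

open MeasureTheory Matrix
open scoped RealInnerProductSpace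

/-! ### McDiarmid's inequality -/

section Concentration
variable {Ω : Type*} [MeasurableSpace Ω]

lemma integrable_of_abs_le {μ : Measure Ω} [IsFiniteMeasure μ] {f : Ω → ℝ} (hf : Measurable f)
    {B : ℝ} (hB : ∀ x, |f x| ≤ B) : Integrable f μ :=
  Integrable.of_bound hf.aestronglyMeasurable B (Filter.Eventually.of_forall hB)

/-- Hoeffding's lemma, with the range of `h` controlled by its oscillation `c`. -/
lemma integral_exp_le_of_osc {μ : Measure Ω} [IsProbabilityMeasure μ] {h : Ω → ℝ}
    (hm : Measurable h) {B c : ℝ} (hB : ∀ x, |h x| ≤ B) (hc : ∀ x y, h x - h y ≤ c) :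
    ∫ x, Real.exp (h x) ∂μ ≤ Real.exp (∫ x, h x ∂μ + c ^ 2 / 8) := by
  have hne : Nonempty Ω := μ.nonempty_of_neZero
  have hbdd : BddBelow (Set.range h) := ⟨-B, by rintro _ ⟨x, rfl⟩; exact (abs_le.1 (hB x)).1⟩
  have hmem : ∀ x, h x ∈ Set.Icc (⨅ y, h y) ((⨅ y, h y) + c) := by
    refine fun x => ⟨ciInf_le hbdd x, ?_⟩
    have : h x - c ≤ ⨅ y, h y := le_ciInf fun y => by linarith [hc x y]
    linarith
  have hs := ProbabilityTheory.hasSubgaussianMGF_of_mem_Icc (μ := μ) hm.aemeasurable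
    (Filter.Eventually.of_forall hmem)
  have h1 := hs.mgf_le 1
  simp only [ProbabilityTheory.mgf, one_mul, Real.exp_sub, integral_div, add_sub_cancel_left] at h1
  rw [div_le_iff₀ (Real.exp_pos _), ← Real.exp_add] at h1
  refine h1.trans (Real.exp_le_exp.2 (le_of_eq ?_))
  simp only [NNReal.coe_pow, NNReal.coe_div, coe_nnnorm, NNReal.coe_ofNat, Real.norm_eq_abs,
    div_pow, sq_abs]
  ring

/-- Exponential-moment form of **McDiarmid's inequality**, by integrating out one coordinate at a
time. -/
lemma integral_exp_le_of_bounded_differences (μ : Measure Ω) [IsProbabilityMeasure μ] {c : ℝ} :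
    ∀ (n : ℕ) (f : (Fin n → Ω) → ℝ), Measurable f → ∀ B : ℝ, (∀ X, |f X| ≤ B) →
      (∀ X i y, f (Function.update X i y) - f X ≤ c) →
      ∫ X, Real.exp (f X) ∂(Measure.pi fun _ : Fin n => μ) ≤
        Real.exp (∫ X, f X ∂(Measure.pi fun _ : Fin n => μ) + n * c ^ 2 / 8) := by
  intro n
  induction n with
  | zero =>
    intro f _ B _ _
    have : ∀ g : (Fin 0 → Ω) → ℝ, ∫ X, g X ∂(Measure.pi fun _ : Fin 0 => μ) = g default := by
      intro g
      rw [Measure.pi_of_empty _ default]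
      simp
    simp [this]
  | succ n ih =>
    intro f hf B hB hd
    have hmp := (measurePreserving_piFinSuccAbove (fun _ : Fin (n + 1) => μ) 0).symm
    have key : ∀ g : (Fin (n + 1) → Ω) → ℝ, Measurable g → (∃ C, ∀ X, |g X| ≤ C) →
        ∫ X, g X ∂(Measure.pi fun _ : Fin (n + 1) => μ) =
          ∫ Y, ∫ x, g (Fin.cons x Y) ∂μ ∂(Measure.pi fun _ : Fin n => μ) := by
      rintro g hg ⟨C, hC⟩
      have := hmp.integral_comp' (g := g)
      rw [← this, integral_prod_symm]
      · simp [MeasurableEquiv.piFinSuccAbove, Fin.insertNthEquiv]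
      · exact integrable_of_abs_le (hg.comp (MeasurableEquiv.measurable _)) fun _ => hC _
    have hcons : Measurable fun z : Ω × (Fin n → Ω) => (Fin.cons z.1 z.2 : Fin (n + 1) → Ω) := by
      rw [measurable_pi_iff]
      refine Fin.cases ?_ fun i => ?_
      · simpa using measurable_fst
      · simpa [Function.comp_def] using
          (measurable_pi_apply (X := fun _ : Fin n => Ω) i).comp measurable_snd
    have hm2 : Measurable fun z : Ω × (Fin n → Ω) => f (Fin.cons z.1 z.2) := hf.comp hcons
    have hm1 : ∀ Y : Fin n → Ω, Measurable fun x : Ω => f (Fin.cons x Y) := fun Y =>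
      hm2.comp (measurable_id.prodMk measurable_const)
    set g : (Fin n → Ω) → ℝ := fun Y => ∫ x, f (Fin.cons x Y) ∂μ with hgdef
    have hgm : Measurable g := by
      have : StronglyMeasurable fun z : (Fin n → Ω) × Ω => f (Fin.cons z.2 z.1) :=
        (hm2.comp measurable_swap).stronglyMeasurable
      exact this.integral_prod_right.measurable
    have hgB : ∀ Y, |g Y| ≤ B := fun Y => by
      have := norm_integral_le_of_norm_le_const (μ := μ) (f := fun x => f (Fin.cons x Y)) (C := B)
        (Filter.Eventually.of_forall fun _ => hB _)
      simpa using this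
    have hgd : ∀ Y i y, g (Function.update Y i y) - g Y ≤ c := by
      intro Y i y
      rw [hgdef, ← integral_sub (integrable_of_abs_le (hm1 _) fun _ => hB _)
        (integrable_of_abs_le (hm1 _) fun _ => hB _)]
      have : ∫ x, (f (Fin.cons x (Function.update Y i y)) - f (Fin.cons x Y)) ∂μ ≤ ∫ _, c ∂μ := by
        refine integral_mono ((integrable_of_abs_le (hm1 _) fun _ => hB _).sub
          (integrable_of_abs_le (hm1 _) fun _ => hB _)) (integrable_const _) fun x => ?_
        have := hd (Fin.cons x Y) i.succ y
        rwa [← Fin.cons_update] at this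
      simpa using this
    have hexpB : ∀ {α : Type _} (u : α → ℝ), (∀ a, |u a| ≤ B) →
        ∀ a, |Real.exp (u a)| ≤ Real.exp B := fun u hu a => by
      rw [Real.abs_exp]; exact Real.exp_le_exp.2 (abs_le.1 (hu a)).2
    rw [key f hf ⟨B, hB⟩, key (fun X => Real.exp (f X)) (Real.measurable_exp.comp hf)
      ⟨Real.exp B, hexpB f hB⟩]
    have step : ∀ Y, ∫ x, Real.exp (f (Fin.cons x Y)) ∂μ ≤
        Real.exp (g Y) * Real.exp (c ^ 2 / 8) := by
      intro Y
      rw [← Real.exp_add]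
      refine integral_exp_le_of_osc (hm1 Y) (fun _ => hB _) fun x y => ?_
      have := hd (Fin.cons y Y) 0 x
      rwa [Fin.update_cons_zero] at this
    calc _ ≤ ∫ Y, Real.exp (g Y) * Real.exp (c ^ 2 / 8) ∂(Measure.pi fun _ : Fin n => μ) := by
          refine integral_mono_of_nonneg (Filter.Eventually.of_forall fun Y =>
            integral_nonneg fun _ => (Real.exp_pos _).le) ?_ (Filter.Eventually.of_forall step)
          exact (integrable_of_abs_le (Real.measurable_exp.comp hgm) (hexpB g hgB)).mul_const _
      _ ≤ Real.exp (∫ Y, g Y ∂(Measure.pi fun _ : Fin n => μ) + n * c ^ 2 / 8)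
            * Real.exp (c ^ 2 / 8) := by
          rw [integral_mul_const]
          exact mul_le_mul_of_nonneg_right (ih g hgm B hgB hgd) (Real.exp_pos _).le
      _ = _ := by
          rw [← Real.exp_add]
          congr 1
          push_cast
          ring

/-- **McDiarmid's inequality** for a functional of nonpositive mean. -/
lemma measure_gt_le_of_bounded_differences (μ : Measure Ω) [IsProbabilityMeasure μ] {n : ℕ}
    (hn : 0 < n) {c : ℝ} (hc : 0 < c) {f : (Fin n → Ω) → ℝ} (hf : Measurable f) {B : ℝ}
    (hB : ∀ X, |f X| ≤ B) (hd : ∀ X i y, f (Function.update X i y) - f X ≤ c)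
    (hmean : ∫ X, f X ∂(Measure.pi fun _ : Fin n => μ) ≤ 0)
    {δ : ℝ} (hδ : δ ∈ Set.Ioo (0 : ℝ) 1) :
    (Measure.pi fun _ : Fin n => μ) {X | c * Real.sqrt (n * Real.log (1 / δ) / 2) < f X} ≤
      ENNReal.ofReal δ := by
  have hn' : (0 : ℝ) < n := by exact_mod_cast hn
  have hL : 0 < Real.log (1 / δ) := Real.log_pos (by rw [lt_div_iff₀ hδ.1]; linarith [hδ.2])
  set s := Real.sqrt (n * Real.log (1 / δ) / 2) with hs
  have hs2 : s ^ 2 = n * Real.log (1 / δ) / 2 := Real.sq_sqrt (by positivity)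
  -- The exponent that optimises the Chernoff bound.
  set t : ℝ := 4 * s / (n * c) with ht
  have hs0 : 0 < s := Real.sqrt_pos.2 (by positivity)
  have ht0 : 0 < t := by positivity
  have hmgf := integral_exp_le_of_bounded_differences μ (c := t * c) n (fun X => t * f X)
    (hf.const_mul t) (t * B)
    (fun X => by rw [abs_mul, abs_of_pos ht0]; exact mul_le_mul_of_nonneg_left (hB X) ht0.le)
    (fun X i y => by rw [← mul_sub]; exact mul_le_mul_of_nonneg_left (hd X i y) ht0.le)
  rw [integral_const_mul] at hmgf
  have hint : Integrable (fun X => Real.exp (t * f X)) (Measure.pi fun _ : Fin n => μ) := by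
    refine integrable_of_abs_le (B := Real.exp (t * B))
      (Real.measurable_exp.comp (hf.const_mul t)) fun X => ?_
    rw [Real.abs_exp]
    exact Real.exp_le_exp.2 (mul_le_mul_of_nonneg_left (abs_le.1 (hB X)).2 ht0.le)
  have hch := ProbabilityTheory.measure_ge_le_exp_mul_mgf (c * s) ht0.le hint
  rw [← ofReal_measureReal]
  refine ENNReal.ofReal_le_ofReal ?_
  have hsub : {X | c * s < f X} ⊆ {X | c * s ≤ f X} := by
    intro X hX
    simp only [Set.mem_ofPred_eq] at hX ⊢
    exact hX.le
  refine (measureReal_mono hsub).trans (hch.trans ?_)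
  have h2 : ProbabilityTheory.mgf f (Measure.pi fun _ : Fin n => μ) t ≤
      Real.exp (n * (t * c) ^ 2 / 8) := by
    refine hmgf.trans (Real.exp_le_exp.2 ?_)
    nlinarith
  refine (mul_le_mul_of_nonneg_left h2 (Real.exp_pos _).le).trans (le_of_eq ?_)
  rw [← Real.exp_add]
  have : -t * (c * s) + n * (t * c) ^ 2 / 8 = - Real.log (1 / δ) := by
    have e1 : -t * (c * s) + n * (t * c) ^ 2 / 8 = - (2 / n) * s ^ 2 := by
      rw [ht]; field_simp; ring
    rw [e1, hs2]; field_simp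
  rw [this, one_div, Real.log_inv, neg_neg, Real.exp_log hδ.1]

end Concentration

/-! ### Symmetrisation and uniform deviations -/

section Symmetrization
variable {Ω : Type*} {n : ℕ} {f : ℕ → Ω → ℝ} {M : ℝ}

lemma bddAbove_range_of_abs_le {g : ℕ → ℝ} {B : ℝ} (h : ∀ m, |g m| ≤ B) :
    BddAbove (Set.range g) :=
  ⟨B, by rintro _ ⟨m, rfl⟩; exact (abs_le.1 (h m)).2⟩

lemma abs_ciSup_le_of_abs_le {g : ℕ → ℝ} {B : ℝ} (h : ∀ m, |g m| ≤ B) : |⨆ m, g m| ≤ B :=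
  abs_le.2 ⟨(abs_le.1 (h 0)).1.trans (le_ciSup (bddAbove_range_of_abs_le h) 0),
    ciSup_le fun m => (abs_le.1 (h m)).2⟩

lemma ciSup_sub_ciSup_le {g h : ℕ → ℝ} {B c : ℝ} (hh : ∀ m, |h m| ≤ B)
    (hgh : ∀ m, g m - h m ≤ c) : (⨆ m, g m) - ⨆ m, h m ≤ c := by
  rw [sub_le_iff_le_add]
  refine ciSup_le fun m => ?_
  linarith [hgh m, le_ciSup (bddAbove_range_of_abs_le hh) m]

lemma sum_update_sub_sum (F : Fin n → Ω → ℝ) (X : Fin n → Ω) (i : Fin n) (y : Ω) :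
    ∑ j, F j (Function.update X i y j) - ∑ j, F j (X j) = F i y - F i (X i) := by
  rw [← Finset.sum_sub_distrib, Finset.sum_eq_single i]
  · simp
  · intro j _ hj; simp [Function.update_of_ne hj]
  · simp

/-- The Rademacher sign attached to a bit. -/
def bitSign (b : Bool) : ℝ := if b then 1 else -1

lemma bitSign_not (b : Bool) : bitSign (!b) = -bitSign b := by cases b <;> simp [bitSign]

lemma bitSign_mul_self (b : Bool) : bitSign b * bitSign b = 1 := by cases b <;> simp [bitSign]

lemma abs_bitSign (b : Bool) : |bitSign b| = 1 := by cases b <;> simp [bitSign]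

/-- Supremum over the countable class `f` of the sample sums with weights `s`. -/
noncomputable def signedSup (f : ℕ → Ω → ℝ) (s : Fin n → ℝ) (X : Fin n → Ω) : ℝ :=
  ⨆ m, ∑ i, s i * f m (X i)

/-- Empirical Rademacher complexity of the class `f` on the sample `X`, without the factor `1 / n`:
the average of `signedSup` over all `2 ^ n` sign patterns. -/
noncomputable def radSum (f : ℕ → Ω → ℝ) (X : Fin n → Ω) : ℝ :=
  (∑ σ : Fin n → Bool, signedSup f (fun i => bitSign (σ i)) X) / 2 ^ n

/-- Largest excess over the class `f` of `n` times the mean over the sample sum. -/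
noncomputable def genGap [MeasurableSpace Ω] (μ : Measure Ω) (f : ℕ → Ω → ℝ) (X : Fin n → Ω) : ℝ :=
  ⨆ m, ∑ i, (∫ x, f m x ∂μ - f m (X i))

lemma abs_sum_le_card_mul {g : Fin n → ℝ} {B : ℝ} (h : ∀ i, |g i| ≤ B) : |∑ i, g i| ≤ n * B := by
  refine (Finset.abs_sum_le_sum_abs _ _).trans ((Finset.sum_le_sum fun i _ => h i).trans ?_)
  simp

lemma abs_signed_sum_le (hfM : ∀ m x, f m x ∈ Set.Icc 0 M) {s : Fin n → ℝ} (hs : ∀ i, |s i| = 1)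
    (X : Fin n → Ω) (m : ℕ) : |∑ i, s i * f m (X i)| ≤ n * M :=
  abs_sum_le_card_mul fun i => by
    rw [abs_mul, hs, one_mul, abs_of_nonneg (hfM m _).1]; exact (hfM m _).2

lemma signedSup_sub_update_le (hfM : ∀ m x, f m x ∈ Set.Icc 0 M) {s : Fin n → ℝ}
    (hs : ∀ i, |s i| = 1) (X : Fin n → Ω) (i : Fin n) (y : Ω) :
    signedSup f s X - signedSup f s (Function.update X i y) ≤ M := by
  refine ciSup_sub_ciSup_le (abs_signed_sum_le hfM hs _) fun m => ?_
  have h := sum_update_sub_sum (fun j x => s j * f m x) X i y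
  have h1 := hfM m (X i)
  have h2 := hfM m y
  rcases eq_or_eq_neg_of_abs_eq (hs i) with h3 | h3 <;> rw [h3] at h <;>
    linarith [h1.1, h1.2, h2.1, h2.2]

lemma abs_radSum_le (hfM : ∀ m x, f m x ∈ Set.Icc 0 M) (X : Fin n → Ω) :
    |radSum f X| ≤ n * M := by
  rw [radSum, abs_div, abs_of_pos (by positivity : (0 : ℝ) < 2 ^ n), div_le_iff₀ (by positivity)]
  refine (Finset.abs_sum_le_sum_abs _ _).trans ((Finset.sum_le_sum fun σ _ =>
    abs_ciSup_le_of_abs_le (abs_signed_sum_le hfM (fun i => abs_bitSign (σ i)) X)).trans ?_)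
  simp [mul_comm]

lemma radSum_sub_update_le (hfM : ∀ m x, f m x ∈ Set.Icc 0 M) (X : Fin n → Ω) (i : Fin n)
    (y : Ω) : radSum f X - radSum f (Function.update X i y) ≤ M := by
  rw [radSum, radSum, ← sub_div, ← Finset.sum_sub_distrib, div_le_iff₀ (by positivity)]
  refine (Finset.sum_le_sum fun σ _ =>
    signedSup_sub_update_le hfM (fun i => abs_bitSign (σ i)) X i y).trans ?_
  simp [mul_comm]

/-- Signed comparison, uniform over the class `f`, of a sample `Z.1` with a ghost sample `Z.2`. -/
noncomputable def ghostSup (f : ℕ → Ω → ℝ) (s : Fin n → ℝ)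
    (Z : (Fin n → Ω) × (Fin n → Ω)) : ℝ :=
  ⨆ m, ∑ i, s i * (f m (Z.2 i) - f m (Z.1 i))

lemma abs_ghost_sum_le (hfM : ∀ m x, f m x ∈ Set.Icc 0 M) {s : Fin n → ℝ} (hs : ∀ i, |s i| = 1)
    (Z : (Fin n → Ω) × (Fin n → Ω)) (m : ℕ) :
    |∑ i, s i * (f m (Z.2 i) - f m (Z.1 i))| ≤ n * M :=
  abs_sum_le_card_mul fun i => by
    rw [abs_mul, hs, one_mul]
    have h1 := hfM m (Z.1 i)
    have h2 := hfM m (Z.2 i)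
    exact abs_le.2 ⟨by linarith [h1.2, h2.1], by linarith [h1.1, h2.2]⟩

variable [MeasurableSpace Ω]

lemma measurable_signedSup (hf : ∀ m, Measurable (f m)) (s : Fin n → ℝ) :
    Measurable (signedSup f s) :=
  Measurable.iSup fun m => Finset.measurable_sum _ fun i _ =>
    ((hf m).comp (measurable_pi_apply i)).const_mul _

lemma measurable_radSum (hf : ∀ m, Measurable (f m)) :
    Measurable (radSum f : (Fin n → Ω) → ℝ) :=
  (Finset.measurable_sum _ fun _ _ => measurable_signedSup hf _).div_const _

lemma measurable_genGap (μ : Measure Ω) (hf : ∀ m, Measurable (f m)) :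
    Measurable (genGap μ f : (Fin n → Ω) → ℝ) :=
  Measurable.iSup fun m => Finset.measurable_sum _ fun i _ =>
    measurable_const.sub ((hf m).comp (measurable_pi_apply i))

lemma integral_mem_Icc (μ : Measure Ω) [IsProbabilityMeasure μ] (hf : ∀ m, Measurable (f m))
    (hfM : ∀ m x, f m x ∈ Set.Icc 0 M) (m : ℕ) : ∫ x, f m x ∂μ ∈ Set.Icc 0 M := by
  refine ⟨integral_nonneg fun x => (hfM m x).1, ?_⟩
  have : ∫ x, f m x ∂μ ≤ ∫ _, M ∂μ := integral_mono
    (integrable_of_abs_le (B := M) (hf m) fun x => by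
      rw [abs_of_nonneg (hfM m x).1]; exact (hfM m x).2)
    (integrable_const _) fun x => (hfM m x).2
  simpa using this

lemma abs_gap_sum_le (μ : Measure Ω) [IsProbabilityMeasure μ] (hf : ∀ m, Measurable (f m))
    (hfM : ∀ m x, f m x ∈ Set.Icc 0 M) (X : Fin n → Ω) (m : ℕ) :
    |∑ i, (∫ x, f m x ∂μ - f m (X i))| ≤ n * M :=
  abs_sum_le_card_mul fun i => by
    have h1 := integral_mem_Icc μ hf hfM m
    have h2 := hfM m (X i)
    exact abs_le.2 ⟨by linarith [h1.1, h2.2], by linarith [h1.2, h2.1]⟩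

lemma genGap_update_sub_le (μ : Measure Ω) [IsProbabilityMeasure μ] (hf : ∀ m, Measurable (f m))
    (hfM : ∀ m x, f m x ∈ Set.Icc 0 M) (X : Fin n → Ω) (i : Fin n) (y : Ω) :
    genGap μ f (Function.update X i y) - genGap μ f X ≤ M := by
  refine ciSup_sub_ciSup_le (abs_gap_sum_le μ hf hfM _) fun m => ?_
  have h := sum_update_sub_sum (fun _ x => ∫ x, f m x ∂μ - f m x) X i y
  linarith [(hfM m (X i)).2, (hfM m y).1]

lemma measurable_ghostSup (hf : ∀ m, Measurable (f m)) (s : Fin n → ℝ) :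
    Measurable (ghostSup f s) :=
  Measurable.iSup fun m => Finset.measurable_sum _ fun i _ =>
    (((hf m).comp ((measurable_pi_apply i).comp measurable_snd)).sub
      ((hf m).comp ((measurable_pi_apply i).comp measurable_fst))).const_mul _

lemma integral_genGap_le_ghost (μ : Measure Ω) [IsProbabilityMeasure μ]
    (hf : ∀ m, Measurable (f m)) (hfM : ∀ m x, f m x ∈ Set.Icc 0 M) :
    ∫ X, genGap μ f X ∂(Measure.pi fun _ : Fin n => μ) ≤
      ∫ Z, ghostSup f (fun _ => 1) Z
        ∂((Measure.pi fun _ : Fin n => μ).prod (Measure.pi fun _ : Fin n => μ)) := by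
  set π := Measure.pi fun _ : Fin n => μ
  have hone : ∀ i : Fin n, |(fun _ => (1 : ℝ)) i| = 1 := by simp
  have hint : Integrable (ghostSup f (fun _ : Fin n => (1 : ℝ))) (π.prod π) :=
    integrable_of_abs_le (measurable_ghostSup hf _) fun Z =>
      abs_ciSup_le_of_abs_le (abs_ghost_sum_le hfM hone Z)
  rw [integral_prod _ hint]
  refine integral_mono (integrable_of_abs_le (measurable_genGap μ hf) fun X =>
    abs_ciSup_le_of_abs_le (abs_gap_sum_le μ hf hfM X)) hint.integral_prod_left fun X => ?_
  refine ciSup_le fun m => ?_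
  have hfi : ∀ i : Fin n, Integrable (fun X' : Fin n → Ω => f m (X' i)) π := fun i =>
    integrable_of_abs_le (B := M) ((hf m).comp (measurable_pi_apply i)) fun X' => by
      rw [abs_of_nonneg (hfM m _).1]; exact (hfM m _).2
  have heq : ∑ i, (∫ x, f m x ∂μ - f m (X i)) =
      ∫ X', ∑ i, (1 : ℝ) * (f m (X' i) - f m (X i)) ∂π := by
    simp_rw [one_mul]
    rw [integral_finsetSum _ fun i _ =>
      show Integrable (fun X' : Fin n → Ω => f m (X' i) - f m (X i)) π from
        (hfi i).sub (integrable_const _)]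
    refine Finset.sum_congr rfl fun i _ => ?_
    rw [integral_sub (hfi i) (integrable_const _)]
    have hmap := (measurePreserving_eval (fun _ : Fin n => μ) i)
    have : ∫ X', f m (X' i) ∂π = ∫ x, f m x ∂μ := by
      conv_rhs => rw [← hmap.map_eq]
      rw [integral_map hmap.measurable.aemeasurable (hf m).aestronglyMeasurable]
    simp [this]
  rw [heq]
  refine integral_mono ?_ ?_ fun X' => ?_
  · exact integrable_finsetSum _ fun i _ => ((hfi i).sub (integrable_const _)).const_mul _
  · exact integrable_of_abs_le ((measurable_ghostSup hf _).comp measurable_prodMk_left) fun X' =>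
      abs_ciSup_le_of_abs_le (abs_ghost_sum_le hfM hone (X, X'))
  · exact le_ciSup (bddAbove_range_of_abs_le (abs_ghost_sum_le hfM hone (X, X'))) m

/-- Exchanging `Z.1 i` with `Z.2 i` where `σ i` is `false` preserves the product measure. -/
lemma integral_ghostSup_eq (μ : Measure Ω) [IsProbabilityMeasure μ] (f : ℕ → Ω → ℝ)
    (σ : Fin n → Bool) :
    ∫ Z, ghostSup f (fun _ => 1) Z
        ∂((Measure.pi fun _ : Fin n => μ).prod (Measure.pi fun _ : Fin n => μ)) =
      ∫ Z, ghostSup f (fun i => bitSign (σ i)) Z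
        ∂((Measure.pi fun _ : Fin n => μ).prod (Measure.pi fun _ : Fin n => μ)) := by
  have hzip := measurePreserving_arrowProdEquivProdArrow Ω Ω (Fin n) (fun _ => μ) (fun _ => μ)
  let e : Fin n → (Ω × Ω ≃ᵐ Ω × Ω) := fun i =>
    if σ i then MeasurableEquiv.refl _ else MeasurableEquiv.prodComm
  have he : ∀ i, MeasurePreserving (e i) (μ.prod μ) (μ.prod μ) := by
    intro i
    by_cases h : σ i
    · simp only [e, h, if_true]
      exact MeasurePreserving.id (μ.prod μ)
    · simp only [e, h]
      exact Measure.measurePreserving_swap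
  have hflip : MeasurePreserving (MeasurableEquiv.piCongrRight e)
      (Measure.pi fun _ : Fin n => μ.prod μ) (Measure.pi fun _ : Fin n => μ.prod μ) :=
    measurePreserving_pi _ _ he
  rw [← hzip.integral_comp', ← hzip.integral_comp', ← hflip.integral_comp']
  refine integral_congr_ae (Filter.Eventually.of_forall fun Z => ?_)
  refine iSup_congr fun m => Finset.sum_congr rfl fun i _ => ?_
  by_cases h : σ i <;>
    simp [MeasurableEquiv.arrowProdEquivProdArrow, Equiv.arrowProdEquivProdArrow,
      MeasurableEquiv.piCongrRight, MeasurableEquiv.prodComm, e, h, bitSign]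

lemma integral_genGap_le_signedSup (μ : Measure Ω) [IsProbabilityMeasure μ]
    (hf : ∀ m, Measurable (f m)) (hfM : ∀ m x, f m x ∈ Set.Icc 0 M) (σ : Fin n → Bool) :
    ∫ X, genGap μ f X ∂(Measure.pi fun _ : Fin n => μ) ≤
      ∫ X, signedSup f (fun i => bitSign (σ i)) X ∂(Measure.pi fun _ : Fin n => μ) +
      ∫ X, signedSup f (fun i => bitSign (!σ i)) X ∂(Measure.pi fun _ : Fin n => μ) := by
  refine (integral_genGap_le_ghost μ hf hfM).trans ?_
  rw [integral_ghostSup_eq μ f σ]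
  set π := Measure.pi fun _ : Fin n => μ
  have hs : ∀ τ : Fin n → Bool, ∀ i, |bitSign (τ i)| = 1 := fun τ i => abs_bitSign _
  have hi : ∀ τ : Fin n → Bool, Integrable (signedSup f fun i => bitSign (τ i)) π := fun τ =>
    integrable_of_abs_le (measurable_signedSup hf _) fun X =>
      abs_ciSup_le_of_abs_le (abs_signed_sum_le hfM (hs τ) X)
  have h2 := (hi σ).comp_snd π
  have h1 := (hi fun i => !σ i).comp_fst π
  have e2 : ∫ X, signedSup f (fun i => bitSign (σ i)) X ∂π =
      ∫ Z, signedSup f (fun i => bitSign (σ i)) Z.2 ∂(π.prod π) := by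
    rw [integral_fun_snd (μ := π) (ν := π)]; simp
  have e1 : ∫ X, signedSup f (fun i => bitSign (!σ i)) X ∂π =
      ∫ Z, signedSup f (fun i => bitSign (!σ i)) Z.1 ∂(π.prod π) := by
    rw [integral_fun_fst (μ := π) (ν := π)]; simp
  rw [e1, e2, ← integral_add h2 h1]
  refine integral_mono (integrable_of_abs_le (measurable_ghostSup hf _) fun Z =>
    abs_ciSup_le_of_abs_le (abs_ghost_sum_le hfM (hs σ) Z)) (h2.add h1) fun Z => ?_
  refine ciSup_le fun m => ?_
  have l2 := le_ciSup (bddAbove_range_of_abs_le (abs_signed_sum_le hfM (hs σ) Z.2)) m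
  have l1 := le_ciSup (bddAbove_range_of_abs_le
    (abs_signed_sum_le hfM (hs fun i => !σ i) Z.1)) m
  refine le_trans (le_of_eq ?_) (add_le_add l2 l1)
  rw [← Finset.sum_add_distrib]
  refine Finset.sum_congr rfl fun i _ => ?_
  rw [bitSign_not]; ring

lemma integral_genGap_le (μ : Measure Ω) [IsProbabilityMeasure μ]
    (hf : ∀ m, Measurable (f m)) (hfM : ∀ m x, f m x ∈ Set.Icc 0 M) :
    ∫ X, genGap μ f X ∂(Measure.pi fun _ : Fin n => μ) ≤
      2 * ∫ X, radSum f X ∂(Measure.pi fun _ : Fin n => μ) := by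
  set π := Measure.pi fun _ : Fin n => μ
  have hs : ∀ τ : Fin n → Bool, ∀ i, |bitSign (τ i)| = 1 := fun τ i => abs_bitSign _
  have hi : ∀ τ : Fin n → Bool, Integrable (signedSup f fun i => bitSign (τ i)) π := fun τ =>
    integrable_of_abs_le (measurable_signedSup hf _) fun X =>
      abs_ciSup_le_of_abs_le (abs_signed_sum_le hfM (hs τ) X)
  have hsum := Finset.sum_le_sum fun (σ : Fin n → Bool) (_ : σ ∈ Finset.univ) =>
    integral_genGap_le_signedSup μ hf hfM σ
  have hnot : ∑ σ : Fin n → Bool, ∫ X, signedSup f (fun i => bitSign (!σ i)) X ∂π =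
      ∑ σ : Fin n → Bool, ∫ X, signedSup f (fun i => bitSign (σ i)) X ∂π :=
    Equiv.sum_comp (Equiv.piCongrRight fun _ : Fin n => Equiv.boolNot)
      fun σ : Fin n → Bool => ∫ X, signedSup f (fun i => bitSign (σ i)) X ∂π
  have hrad : ∫ X, radSum f X ∂π =
      (∑ σ : Fin n → Bool, ∫ X, signedSup f (fun i => bitSign (σ i)) X ∂π) / 2 ^ n := by
    simp only [radSum]
    rw [integral_div, integral_finsetSum _ fun σ _ => hi σ]
  rw [Finset.sum_add_distrib, hnot] at hsum
  simp only [Finset.sum_const, Finset.card_univ, Fintype.card_pi, Fintype.card_bool,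
    Finset.prod_const, Fintype.card_fin, nsmul_eq_mul, Nat.cast_pow, Nat.cast_ofNat] at hsum
  rw [hrad, ← mul_div_assoc, le_div_iff₀ (by positivity)]
  linarith

/-- One-sided uniform law of large numbers with empirical Rademacher complexity. McDiarmid's
inequality is applied once, to `genGap - 2 * radSum`, whose differences are at most `M + 2 * M`. -/
lemma uniform_deviation (μ : Measure Ω) [IsProbabilityMeasure μ] (hn : 0 < n)
    (hf : ∀ m, Measurable (f m)) (hM : 0 ≤ M) (hfM : ∀ m x, f m x ∈ Set.Icc 0 M)
    {δ : ℝ} (hδ : δ ∈ Set.Ioo (0 : ℝ) 1) :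
    (Measure.pi fun _ : Fin n => μ) {X | ∃ m, ∑ i, f m (X i) + 2 * radSum f X
        + 3 * M * Real.sqrt (n * Real.log (1 / δ) / 2) < n * ∫ x, f m x ∂μ} ≤
      ENNReal.ofReal δ := by
  rcases hM.eq_or_lt with rfl | hM
  · have h0 : ∀ m x, f m x = 0 := fun m x => le_antisymm (hfM m x).2 (hfM m x).1
    simp [h0, radSum, signedSup]
  have hmeas : Measurable fun X : Fin n → Ω => genGap μ f X - 2 * radSum f X :=
    (measurable_genGap μ hf).sub ((measurable_radSum hf).const_mul 2)
  have hgB := fun X : Fin n → Ω => abs_ciSup_le_of_abs_le (abs_gap_sum_le μ hf hfM X)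
  have hrB := fun X : Fin n → Ω => abs_radSum_le hfM X
  refine le_trans (measure_mono ?_) (measure_gt_le_of_bounded_differences μ hn (c := 3 * M)
    (by positivity) hmeas (B := 3 * (n * M)) (fun X => ?_) (fun X i y => ?_) ?_ hδ)
  · rintro X ⟨m, hm⟩
    have := le_ciSup (bddAbove_range_of_abs_le (abs_gap_sum_le μ hf hfM X)) m
    rw [Finset.sum_sub_distrib] at this
    simp only [Finset.sum_const, Finset.card_univ, Fintype.card_fin, nsmul_eq_mul] at this
    have h' : (n : ℝ) * ∫ x, f m x ∂μ - ∑ i, f m (X i) ≤ genGap μ f X := this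
    simp only [Set.mem_ofPred_eq]
    linarith
  · have h1 := abs_le.1 (hgB X)
    have h2 := abs_le.1 (hrB X)
    simp only [genGap]
    exact abs_le.2 ⟨by linarith [h1.1, h2.2], by linarith [h1.2, h2.1]⟩
  · linarith [genGap_update_sub_le μ hf hfM X i y, radSum_sub_update_le hfM X i y]
  · rw [integral_sub (integrable_of_abs_le (measurable_genGap μ hf) hgB)
      ((integrable_of_abs_le (measurable_radSum hf) hrB).const_mul 2), integral_const_mul]
    linarith [integral_genGap_le (n := n) μ hf hfM]

end Symmetrization

/-! ### Frames, tensor squares and the weighted Gram matrix -/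

section HilbertSpace
variable {H : Type*} [NormedAddCommGroup H] [InnerProductSpace ℝ H] {k n : ℕ}

/-- Pairwise orthogonal `k`-tuples in the unit ball. Allowing norms below `1` keeps the set nonempty
when `dim H < k`, and lets an eigenvector of eigenvalue `0` be represented by the zero vector. -/
def orthoFrames (H : Type*) [NormedAddCommGroup H] [InnerProductSpace ℝ H] (k : ℕ) :
    Set (Fin k → H) :=
  {u | (∀ i j, i ≠ j → ⟪u i, u j⟫ = 0) ∧ ∀ i, ‖u i‖ ≤ 1}

/-- `‖v‖²` minus the energy of `v` along `u`; for orthonormal `u` this is the squared distance from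
`v` to the span of `u`. -/
def residSq (u : Fin k → H) (v : H) : ℝ := ‖v‖ ^ 2 - ∑ j, ⟪u j, v⟫ ^ 2

lemma norm_sub_sq_le_residSq {u : Fin k → H} (hu : u ∈ orthoFrames H k) (v : H) :
    ‖v - ∑ j, ⟪u j, v⟫ • u j‖ ^ 2 ≤ residSq u v := by
  have h1 : ⟪v, ∑ j, ⟪u j, v⟫ • u j⟫ = ∑ j, ⟪u j, v⟫ ^ 2 := by
    rw [inner_sum]
    refine Finset.sum_congr rfl fun j _ => ?_
    rw [inner_smul_right, real_inner_comm, sq]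
  have h2 : ‖∑ j, ⟪u j, v⟫ • u j‖ ^ 2 ≤ ∑ j, ⟪u j, v⟫ ^ 2 := by
    rw [← real_inner_self_eq_norm_sq, sum_inner]
    refine Finset.sum_le_sum fun i _ => ?_
    rw [inner_sum, Finset.sum_eq_single i]
    · rw [inner_smul_left, inner_smul_right, real_inner_self_eq_norm_sq]
      have h3 : ‖u i‖ ^ 2 ≤ 1 := pow_le_one₀ (norm_nonneg _) (hu.2 i)
      have h4 := mul_le_mul_of_nonneg_left h3 (sq_nonneg ⟪u i, v⟫)
      simp only [conj_trivial]
      linarith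
    · intro j _ hj
      rw [inner_smul_left, inner_smul_right, hu.1 i j hj.symm]
      simp
    · simp
  rw [norm_sub_sq_real, h1, residSq]
  linarith

lemma residSq_nonneg {u : Fin k → H} (hu : u ∈ orthoFrames H k) (v : H) : 0 ≤ residSq u v :=
  (sq_nonneg _).trans (norm_sub_sq_le_residSq hu v)

lemma residSq_le (u : Fin k → H) (v : H) : residSq u v ≤ ‖v‖ ^ 2 :=
  sub_le_self _ (Finset.sum_nonneg fun _ _ => sq_nonneg _)

lemma infDist_sq_le_residSq {u : Fin k → H} (hu : u ∈ orthoFrames H k) {S : Submodule ℝ H}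
    (hS : ∀ j, u j ∈ S) (v : H) : Metric.infDist v (S : Set H) ^ 2 ≤ residSq u v := by
  refine le_trans (pow_le_pow_left₀ Metric.infDist_nonneg ?_ 2) (norm_sub_sq_le_residSq hu v)
  rw [← dist_eq_norm]
  exact Metric.infDist_le_dist_of_mem (S.sum_mem fun j _ => S.smul_mem _ (hS j))

open scoped TensorProduct in
/-- Cauchy–Schwarz in `H ⊗ H`, where `∑ⱼ uⱼ ⊗ uⱼ` has norm at most `√k`: this linearises the
dependence on `u` and makes the right-hand side uniform over all frames. -/
lemma weighted_residSq_le {u : Fin k → H} (hu : u ∈ orthoFrames H k) (a : Fin n → ℝ)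
    (x : Fin n → H) :
    ∑ i, a i * residSq u (x i) ≤
      ∑ i, a i * ‖x i‖ ^ 2 + Real.sqrt k * ‖∑ i, a i • (x i ⊗ₜ[ℝ] x i)‖ := by
  set A : H ⊗[ℝ] H := ∑ j, u j ⊗ₜ[ℝ] u j
  set T : H ⊗[ℝ] H := ∑ i, a i • (x i ⊗ₜ[ℝ] x i)
  have hAT : ⟪A, T⟫ = ∑ i, a i * ∑ j, ⟪u j, x i⟫ ^ 2 := by
    rw [inner_sum]
    refine Finset.sum_congr rfl fun i _ => ?_
    rw [TensorProduct.smul_tmul', sum_inner, Finset.mul_sum]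
    refine Finset.sum_congr rfl fun j _ => ?_
    rw [TensorProduct.inner_tmul, real_inner_smul_right]
    ring
  have hAA : ‖A‖ ≤ Real.sqrt k := by
    refine Real.le_sqrt_of_sq_le ?_
    rw [← real_inner_self_eq_norm_sq]
    simp only [A, sum_inner, inner_sum, TensorProduct.inner_tmul]
    have : ∀ i, ∑ j, ⟪u j, u i⟫ * ⟪u j, u i⟫ ≤ 1 := by
      intro i
      rw [Finset.sum_eq_single i]
      · rw [real_inner_self_eq_norm_sq]
        have h3 : ‖u i‖ ^ 2 ≤ 1 := pow_le_one₀ (norm_nonneg _) (hu.2 i)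
        exact mul_le_one₀ h3 (sq_nonneg _) h3
      · intro j _ hj; rw [hu.1 j i hj]; simp
      · simp
    refine (Finset.sum_le_sum fun i _ => this i).trans ?_
    simp
  have hcs := (abs_le.1 (abs_real_inner_le_norm A T)).1
  have hm := mul_le_mul_of_nonneg_right hAA (norm_nonneg T)
  simp only [residSq, mul_sub, Finset.sum_sub_distrib]
  rw [← hAT]
  linarith

/-- Flipping the `i`-th bit pairs off opposite terms. -/
lemma sum_bitSign (i : Fin n) (g : (Fin n → Bool) → ℝ)
    (hg : ∀ σ, g (Function.update σ i (!σ i)) = g σ) :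
    ∑ σ : Fin n → Bool, bitSign (σ i) * g σ = 0 := by
  have hinv : Function.Involutive fun σ : Fin n → Bool => Function.update σ i (!σ i) := by
    intro σ; simp
  have h := Equiv.sum_comp hinv.toPerm fun σ : Fin n → Bool => bitSign (σ i) * g σ
  simp only [Function.Involutive.coe_toPerm, Function.update_self, bitSign_not, hg, neg_mul,
    Finset.sum_neg_distrib] at h
  linarith

lemma sum_norm_sq_rademacher {E : Type*} [NormedAddCommGroup E] [InnerProductSpace ℝ E]
    (t : Fin n → E) :
    ∑ σ : Fin n → Bool, ‖∑ i, bitSign (σ i) • t i‖ ^ 2 = 2 ^ n * ∑ i, ‖t i‖ ^ 2 := by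
  simp only [← real_inner_self_eq_norm_sq, sum_inner, inner_sum, inner_smul_left, inner_smul_right,
    conj_trivial, Finset.mul_sum]
  rw [Finset.sum_comm]
  refine Finset.sum_congr rfl fun i _ => ?_
  rw [Finset.sum_comm, Finset.sum_eq_single i]
  · simp [← mul_assoc, bitSign_mul_self]
  · intro j _ hj
    have h := sum_bitSign j (fun σ => bitSign (σ i) * ⟪t j, t i⟫) fun σ => by
      simp [Function.update_of_ne hj.symm]
    rw [← h]
    exact Finset.sum_congr rfl fun σ _ => by ring
  · simp

lemma sum_norm_rademacher_le {E : Type*} [NormedAddCommGroup E] [InnerProductSpace ℝ E]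
    (t : Fin n → E) :
    ∑ σ : Fin n → Bool, ‖∑ i, bitSign (σ i) • t i‖ ≤ 2 ^ n * Real.sqrt (∑ i, ‖t i‖ ^ 2) := by
  have h := sq_sum_le_card_mul_sum_sq (s := (Finset.univ : Finset (Fin n → Bool)))
    (f := fun σ => ‖∑ i, bitSign (σ i) • t i‖)
  rw [sum_norm_sq_rademacher] at h
  refine (sq_le_sq₀ (by positivity) (by positivity)).1 ?_
  rw [mul_pow, Real.sq_sqrt (Finset.sum_nonneg fun _ _ => sq_nonneg _)]
  refine h.trans (le_of_eq ?_)
  simp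
  ring

open scoped TensorProduct in
/-- Rademacher complexity of the class of weighted residuals, through the second moment of
`∑ᵢ ±w(Xᵢ) ψ(Xᵢ) ⊗ ψ(Xᵢ)`. -/
lemma radSum_residSq_le {Ω : Type*} {ψ : Ω → H} {w : Ω → ℝ} {u : ℕ → Fin k → H}
    (hu : ∀ m, u m ∈ orthoFrames H k) (X : Fin n → Ω) :
    radSum (fun m x => w x * residSq (u m) (ψ x)) X ≤
      Real.sqrt k * Real.sqrt (∑ i, w (X i) ^ 2 * ⟪ψ (X i), ψ (X i)⟫ ^ 2) := by
  set t : Fin n → H ⊗[ℝ] H := fun i => w (X i) • (ψ (X i) ⊗ₜ[ℝ] ψ (X i)) with ht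
  have hone : ∀ σ : Fin n → Bool,
      signedSup (fun m x => w x * residSq (u m) (ψ x)) (fun i => bitSign (σ i)) X ≤
        ∑ i, bitSign (σ i) * (w (X i) * ‖ψ (X i)‖ ^ 2) +
          Real.sqrt k * ‖∑ i, bitSign (σ i) • t i‖ := by
    refine fun σ => ciSup_le fun m => ?_
    have := weighted_residSq_le (hu m) (fun i => bitSign (σ i) * w (X i)) fun i => ψ (X i)
    simpa only [ht, smul_smul, mul_assoc] using this
  have hzero : ∑ σ : Fin n → Bool, ∑ i, bitSign (σ i) * (w (X i) * ‖ψ (X i)‖ ^ 2) = 0 := by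
    rw [Finset.sum_comm]
    exact Finset.sum_eq_zero fun i _ => sum_bitSign i (fun _ => _) fun _ => rfl
  have hnorm : ∀ i, ‖t i‖ ^ 2 = w (X i) ^ 2 * ⟪ψ (X i), ψ (X i)⟫ ^ 2 := by
    intro i
    simp only [ht, norm_smul, TensorProduct.norm_tmul, real_inner_self_eq_norm_sq, mul_pow,
      Real.norm_eq_abs, sq_abs]
    ring
  have h := Finset.sum_le_sum fun (σ : Fin n → Bool) (_ : σ ∈ Finset.univ) => hone σ
  rw [Finset.sum_add_distrib, hzero, zero_add, ← Finset.mul_sum] at h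
  have h2 := mul_le_mul_of_nonneg_left (sum_norm_rademacher_le t) (Real.sqrt_nonneg k)
  simp only [hnorm] at h2
  rw [radSum, div_le_iff₀ (by positivity)]
  linarith

lemma sum_castLE_add_sum_ite (hk : k ≤ n) (g : Fin n → ℝ) :
    ∑ j : Fin k, g (Fin.castLE hk j) + ∑ j : Fin n, (if k ≤ (j : ℕ) then g j else 0) =
      ∑ j, g j := by
  obtain ⟨r, rfl⟩ := Nat.exists_eq_add_of_le hk
  rw [Fin.sum_univ_add, Fin.sum_univ_add g]
  have : ∀ j : Fin k, ¬ k ≤ (j : ℕ) := fun j => not_le.2 j.2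
  simp [this]
  rfl

/-- The frame `vⱼ / √λⱼ`, where `vⱼ = ∑ᵢ bⱼ(i) √aᵢ xᵢ` lifts the `j`-th eigenvector `bⱼ` of the
weighted Gram matrix to `H` (in the enumeration `σ`, for the first `k` indices), captures exactly the
sum of the corresponding eigenvalues. The enumeration is arbitrary. -/
lemma exists_frame_of_eigenvalues (x : Fin n → H) (a : Fin n → ℝ) (ha : ∀ i, 0 ≤ a i)
    (hsym : (Matrix.diagonal (fun i => Real.sqrt (a i)) * Matrix.of (fun i j => ⟪x i, x j⟫)
      * Matrix.diagonal (fun i => Real.sqrt (a i))).IsHermitian)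
    (σ : Equiv.Perm (Fin n)) (hk : k ≤ n) :
    ∃ u ∈ orthoFrames H k, (∀ j, u j ∈ Submodule.span ℝ (Set.range x)) ∧
      ∑ i, a i * residSq u (x i) =
        ∑ j : Fin n, if k ≤ (j : ℕ) then (hsym.eigenvalues ∘ σ) j else 0 := by
  set b := hsym.eigenvectorBasis
  set l := hsym.eigenvalues
  set v : Fin n → H := fun j => ∑ i, (b j i * Real.sqrt (a i)) • x i with hv
  have hb : ∀ j j', ∑ i, b j i * b j' i = if j = j' then 1 else 0 := by
    intro j j'
    have := orthonormal_iff_ite.1 b.orthonormal j j'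
    rw [← this, PiLp.inner_apply]
    simp [mul_comm]
  have hxv : ∀ i j, Real.sqrt (a i) * ⟪x i, v j⟫ = l j * b j i := by
    intro i j
    have h := congrFun (hsym.mulVec_eigenvectorBasis j) i
    simp only [Matrix.mulVec, dotProduct, Matrix.mul_diagonal, Matrix.diagonal_mul,
      Matrix.of_apply, Pi.smul_apply, smul_eq_mul] at h
    rw [← h, hv, inner_sum, Finset.mul_sum]
    refine Finset.sum_congr rfl fun m _ => ?_
    rw [inner_smul_right]
    ring
  have hvv : ∀ j j', ⟪v j, v j'⟫ = if j = j' then l j' else 0 := by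
    intro j j'
    have : ⟪v j, v j'⟫ = l j' * ∑ i, b j i * b j' i := by
      conv_lhs => rw [hv]
      simp only [sum_inner, inner_smul_left, conj_trivial]
      rw [Finset.mul_sum]
      refine Finset.sum_congr rfl fun i _ => ?_
      rw [mul_assoc, hxv]
      ring
    rw [this, hb]
    split_ifs <;> simp
  have hl : ∀ j, 0 ≤ l j := fun j => by
    have := hvv j j
    rw [if_pos rfl] at this
    rw [← this]
    exact real_inner_self_nonneg
  have htr : ∑ i, a i * ‖x i‖ ^ 2 = ∑ j, l j := by
    have := hsym.trace_eq_sum_eigenvalues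
    simp only [Matrix.trace, Matrix.diag, Matrix.mul_diagonal, Matrix.diagonal_mul,
      Matrix.of_apply, RCLike.ofReal_real_eq_id, id] at this
    rw [← this]
    refine Finset.sum_congr rfl fun i _ => ?_
    rw [real_inner_self_eq_norm_sq]
    nlinarith [Real.mul_self_sqrt (ha i)]
  -- When `λⱼ = 0` the vector `vⱼ` vanishes and `(√0)⁻¹ = 0`, so such an entry of the frame is `0`.
  refine ⟨fun j => (Real.sqrt (l (σ (Fin.castLE hk j))))⁻¹ • v (σ (Fin.castLE hk j)),
    ⟨fun i j hij => ?_, fun i => ?_⟩, fun j => ?_, ?_⟩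
  · have : σ (Fin.castLE hk i) ≠ σ (Fin.castLE hk j) := fun h =>
      hij (Fin.castLE_injective hk (σ.injective h))
    rw [inner_smul_left, inner_smul_right, hvv, if_neg this]
    simp
  · have h := hvv (σ (Fin.castLE hk i)) (σ (Fin.castLE hk i))
    rw [if_pos rfl, real_inner_self_eq_norm_sq] at h
    simp only
    rw [← h, Real.sqrt_sq (norm_nonneg _), norm_smul, norm_inv, norm_norm]
    exact inv_mul_le_one
  · exact Submodule.smul_mem _ _ (Submodule.sum_mem _ fun i _ =>
      Submodule.smul_mem _ _ (Submodule.subset_span ⟨i, rfl⟩))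
  · have hterm : ∀ j, ∑ i, a i * ⟪(Real.sqrt (l j))⁻¹ • v j, x i⟫ ^ 2 = l j := by
      intro j
      have : ∀ i, a i * ⟪(Real.sqrt (l j))⁻¹ • v j, x i⟫ ^ 2 =
          (l j)⁻¹ * (l j * l j) * (b j i * b j i) := by
        intro i
        rw [inner_smul_left, conj_trivial, real_inner_comm, mul_pow, inv_pow, Real.sq_sqrt (hl j)]
        have h1 : a i * ⟪x i, v j⟫ ^ 2 = (l j * b j i) ^ 2 := by
          rw [← hxv, mul_pow, Real.sq_sqrt (ha i)]
        linear_combination (l j)⁻¹ * h1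
      simp only [this]
      rw [← Finset.mul_sum, hb, if_pos rfl, mul_one, ← mul_assoc]
      exact inv_mul_mul_self _
    simp only [residSq, mul_sub, Finset.sum_sub_distrib, Finset.mul_sum]
    rw [Finset.sum_comm]
    simp only [hterm]
    rw [htr, ← Equiv.sum_comp σ l]
    have := sum_castLE_add_sum_ite hk (l ∘ σ)
    simp only [Function.comp_apply] at this ⊢
    linarith

lemma continuous_residSq (v : H) : Continuous fun u : Fin k → H => residSq u v := by
  unfold residSq
  fun_prop

lemma measurable_residSq {Ω : Type*} [MeasurableSpace Ω] {ψ : Ω → H} (hψ : StronglyMeasurable ψ)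
    (u : Fin k → H) : Measurable fun x => residSq u (ψ x) :=
  (hψ.norm.measurable.pow_const 2).sub (Finset.measurable_sum _ fun _ _ =>
    (stronglyMeasurable_const.inner hψ).measurable.pow_const 2)

end HilbertSpace

/-- **Weighted interpolation (projection) bias bound (Part (A) of the proof of Theorem 4.5).** -/
theorem stmt_11 {d n : ℕ} (hn : 0 < n)
    {H₀ : Type*} [NormedAddCommGroup H₀] [InnerProductSpace ℝ H₀] [CompleteSpace H₀]
    [TopologicalSpace.SeparableSpace H₀]
    (p q : Measure (Fin d → ℝ)) [IsProbabilityMeasure p] [IsProbabilityMeasure q]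
    (ψ : (Fin d → ℝ) → H₀) (hψ : StronglyMeasurable ψ)
    (w : (Fin d → ℝ) → ℝ) (Wmax : ℝ) (hwmeas : Measurable w)
    (hw0 : ∀ z, 0 ≤ w z) (hwW : ∀ z, w z ≤ Wmax)
    (hq : q = p.withDensity fun z => ENNReal.ofReal (w z))
    (κ : ℝ) (hκ : ∀ z, ⟪ψ z, ψ z⟫ ≤ κ)
    (δ : ℝ) (hδ : δ ∈ Set.Ioo (0 : ℝ) 1) :
    ENNReal.ofReal (1 - 2 * n * δ) ≤
      (Measure.pi fun _ : Fin n => p)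
        {X : Fin n → (Fin d → ℝ) |
          ∀ (hsym : (Matrix.diagonal (fun i => Real.sqrt (w (X i)))
              * Matrix.of (fun i j => ⟪ψ (X i), ψ (X j)⟫)
              * Matrix.diagonal (fun i => Real.sqrt (w (X i)))).IsHermitian)
            (eig : Fin n → ℝ),
            (∃ σ : Equiv.Perm (Fin n), eig = hsym.eigenvalues ∘ σ) →
            Antitone eig →
            ∀ k : ℕ, k ≤ n →
              (∫ x0, (Metric.infDist (ψ x0)
                  (Submodule.span ℝ (Set.range fun i => ψ (X i)) : Set H₀)) ^ 2 ∂q)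
                ≤ (1 / n) * (∑ j : Fin n, if k ≤ (j : ℕ) then eig j else 0)
                  + 2 * Real.sqrt (k / n)
                      * Real.sqrt ((∑ i, (w (X i)) ^ 2 * (⟪ψ (X i), ψ (X i)⟫) ^ 2) / n)
                  + 3 * κ * Wmax * Real.sqrt (Real.log (1 / δ) / (2 * n))} := by
  have hn' : (0 : ℝ) < n := by exact_mod_cast hn
  have hκ0 : 0 ≤ κ := real_inner_self_nonneg.trans (hκ 0)
  have hW0 : 0 ≤ Wmax := (hw0 0).trans (hwW 0)
  have hM0 : 0 ≤ κ * Wmax := mul_nonneg hκ0 hW0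
  have hψκ : ∀ z, ‖ψ z‖ ^ 2 ≤ κ := fun z => by rw [← real_inner_self_eq_norm_sq]; exact hκ z
  have hgmeas : ∀ (k : ℕ) (u : Fin k → H₀), Measurable fun x => w x * residSq u (ψ x) :=
    fun k u => hwmeas.mul (measurable_residSq hψ u)
  have hgM : ∀ (k : ℕ), ∀ u ∈ orthoFrames H₀ k, ∀ x,
      w x * residSq u (ψ x) ∈ Set.Icc 0 (κ * Wmax) := fun k u hu x => by
    refine ⟨mul_nonneg (hw0 x) (residSq_nonneg hu _), ?_⟩
    rw [mul_comm κ]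
    exact mul_le_mul (hwW x) ((residSq_le u _).trans (hψκ x)) (residSq_nonneg hu _) hW0
  have hne : ∀ k, Nonempty (orthoFrames H₀ k) := fun k => ⟨⟨0, by simp [orthoFrames]⟩⟩
  -- Suprema over a dense sequence of frames are measurable; continuity recovers all frames below.
  let U : ∀ k, ℕ → orthoFrames H₀ k := fun k => TopologicalSpace.denseSeq (orthoFrames H₀ k)
  let f : ∀ k, ℕ → (Fin d → ℝ) → ℝ := fun k m x => w x * residSq (U k m : Fin k → H₀) (ψ x)
  -- One bad event for each rank `k = 0, …, n`: there are `n + 1 ≤ 2 * n` of them.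
  let bad : ℕ → Set (Fin n → Fin d → ℝ) := fun k =>
    {X | ∃ m, ∑ i, f k m (X i) + 2 * radSum (f k) X
      + 3 * (κ * Wmax) * Real.sqrt (n * Real.log (1 / δ) / 2) < n * ∫ x, f k m x ∂p}
  have hbad : ∀ k, (Measure.pi fun _ : Fin n => p) (bad k) ≤ ENNReal.ofReal δ := fun k =>
    uniform_deviation p hn (fun m => hgmeas k _) hM0 (fun m x => hgM k _ (U k m).2 x) hδ
  have hunion : (Measure.pi fun _ : Fin n => p) (⋃ k ∈ Finset.range (n + 1), bad k) ≤
      ENNReal.ofReal (2 * n * δ) := by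
    refine (measure_biUnion_finset_le _ _).trans ((Finset.sum_le_sum fun k _ => hbad k).trans ?_)
    rw [Finset.sum_const, Finset.card_range, nsmul_eq_mul, ← ENNReal.ofReal_natCast,
      ← ENNReal.ofReal_mul (by positivity)]
    refine ENNReal.ofReal_le_ofReal (mul_le_mul_of_nonneg_right ?_ hδ.1.le)
    have : (1 : ℝ) ≤ n := by exact_mod_cast hn
    push_cast
    linarith
  -- Subadditivity alone gives the bound, so no measurability of the events is needed.
  have hcompl : ENNReal.ofReal (1 - 2 * n * δ) ≤
      (Measure.pi fun _ : Fin n => p) (⋃ k ∈ Finset.range (n + 1), bad k)ᶜ := by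
    rw [ENNReal.ofReal_sub _ (by have := hδ.1; positivity), ENNReal.ofReal_one, tsub_le_iff_right]
    refine le_trans ?_ (add_le_add_right hunion _)
    rw [← measure_univ (μ := Measure.pi fun _ : Fin n => p), ← Set.compl_union_self]
    exact measure_union_le _ _
  refine hcompl.trans (measure_mono fun X hX => ?_)
  rintro hsym eig ⟨σ, rfl⟩ - k hk
  have hXk : ∀ m, n * ∫ x, f k m x ∂p ≤ ∑ i, f k m (X i) + 2 * radSum (f k) X
      + 3 * (κ * Wmax) * Real.sqrt (n * Real.log (1 / δ) / 2) := by
    intro m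
    by_contra hcon
    exact hX (Set.mem_biUnion (Finset.mem_coe.2 (Finset.mem_range.2 (Nat.lt_succ_of_le hk)))
      ⟨m, not_le.1 hcon⟩)
  have hall : ∀ u : orthoFrames H₀ k, n * ∫ x, w x * residSq (u : Fin k → H₀) (ψ x) ∂p ≤
      ∑ i, w (X i) * residSq (u : Fin k → H₀) (ψ (X i)) + 2 * radSum (f k) X
      + 3 * (κ * Wmax) * Real.sqrt (n * Real.log (1 / δ) / 2) := by
    refine fun u => (TopologicalSpace.denseRange_denseSeq (orthoFrames H₀ k)).induction_on
      (p := fun u : orthoFrames H₀ k => n * ∫ x, w x * residSq (u : Fin k → H₀) (ψ x) ∂p ≤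
      ∑ i, w (X i) * residSq (u : Fin k → H₀) (ψ (X i)) + 2 * radSum (f k) X
      + 3 * (κ * Wmax) * Real.sqrt (n * Real.log (1 / δ) / 2)) u ?_ hXk
    have hc : ∀ x, Continuous fun u : orthoFrames H₀ k =>
        w x * residSq (u : Fin k → H₀) (ψ x) := fun x =>
      continuous_const.mul ((continuous_residSq (ψ x)).comp continuous_subtype_val)
    refine isClosed_le (continuous_const.mul ?_) (((continuous_finsetSum _ fun i _ =>
      hc (X i)).add continuous_const).add continuous_const)
    refine continuous_of_dominated (bound := fun _ => κ * Wmax)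
      (fun u => (hgmeas k u).aestronglyMeasurable)
      (fun u => Filter.Eventually.of_forall fun x => ?_) (integrable_const _)
      (Filter.Eventually.of_forall hc)
    rw [Real.norm_eq_abs, abs_of_nonneg (hgM k u u.2 x).1]
    exact (hgM k u u.2 x).2
  obtain ⟨u, hu, hspan, hsum⟩ := exists_frame_of_eigenvalues (fun i => ψ (X i))
    (fun i => w (X i)) (fun i => hw0 _) hsym σ hk
  have hdist : ∫ x0, (Metric.infDist (ψ x0)
      (Submodule.span ℝ (Set.range fun i => ψ (X i)) : Set H₀)) ^ 2 ∂q ≤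
        ∫ x, w x * residSq u (ψ x) ∂p := by
    have hconv : ∫ x, w x * residSq u (ψ x) ∂p = ∫ x, residSq u (ψ x) ∂q := by
      rw [hq, integral_withDensity_eq_integral_toReal_smul hwmeas.ennreal_ofReal
        (Filter.Eventually.of_forall fun _ => ENNReal.ofReal_lt_top)]
      simp only [ENNReal.toReal_ofReal (hw0 _), smul_eq_mul]
    rw [hconv]
    refine integral_mono_of_nonneg (Filter.Eventually.of_forall fun _ => sq_nonneg _)
      (integrable_of_abs_le (B := κ) (measurable_residSq hψ u) fun x => ?_)
      (Filter.Eventually.of_forall fun x => infDist_sq_le_residSq hu hspan (ψ x))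
    rw [abs_of_nonneg (residSq_nonneg hu _)]
    exact (residSq_le u _).trans (hψκ x)
  have hrad : radSum (f k) X ≤ _ := radSum_residSq_le (w := w) (ψ := ψ) (fun m => (U k m).2) X
  have hfin := hall ⟨u, hu⟩
  simp only at hfin
  rw [hsum] at hfin
  set S := ∑ i, (w (X i)) ^ 2 * (⟪ψ (X i), ψ (X i)⟫) ^ 2
  set E := ∑ j : Fin n, if k ≤ (j : ℕ) then (hsym.eigenvalues ∘ σ) j else 0
  have e1 : Real.sqrt (k / n) * Real.sqrt (S / n) = Real.sqrt k * Real.sqrt S / n := by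
    rw [Real.sqrt_div' _ hn'.le, Real.sqrt_div' _ hn'.le, div_mul_div_comm,
      Real.mul_self_sqrt hn'.le]
  have e2 : Real.sqrt (Real.log (1 / δ) / (2 * n)) =
      Real.sqrt (n * Real.log (1 / δ) / 2) / n := by
    have : Real.log (1 / δ) / (2 * n) = (n * Real.log (1 / δ) / 2) / n ^ 2 := by
      field_simp
    rw [this, Real.sqrt_div' _ (by positivity), Real.sqrt_sq hn'.le]
  refine hdist.trans ?_
  rw [mul_assoc 2, e1, e2]
  have e3 : 1 / n * E + 2 * (Real.sqrt k * Real.sqrt S / n)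
      + 3 * κ * Wmax * (Real.sqrt (n * Real.log (1 / δ) / 2) / n) =
      (E + 2 * (Real.sqrt k * Real.sqrt S)
        + 3 * (κ * Wmax) * Real.sqrt (n * Real.log (1 / δ) / 2)) / n := by
    field_simp
  rw [e3, le_div_iff₀ hn']
  linarith
end

section
/- Regularization bias under the source condition: Let q and q̄ be probability measures on ℝ^d, let ψ : ℝ^d → H₀ be a bounded measurable feature map, and let T_q, T_q̄ be the corresponding covariance operators. Let r̄ ∈ [1/2, 1], u ∈ H₀, λ > 0, and define f_ρ(x) := ⟨ψ(x), T_q̄^{r̄−1/2} u⟩ and f_λ(x) := ⟨ψ(x), (T_q̄ + λ)^{-1} T_q̄ T_q̄^{r̄−1/2} u⟩. Then ‖f_λ − f_ρ‖_{L²(q)} ≤ λ^{r̄} ‖T_q (T_q̄ + λ)^{-1}‖^{1/2} ‖u‖. -/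
/-!
Write `T = T_q̄`, `A = T + λ`, `R = A⁻¹`, `S = T_q` and `P = T ^ (r - 1/2)`.  Since
`R T - 1 = -λ R`, the squared left-hand side is `λ² ⟨S R P u, R P u⟩`.  Two inequalities between
quadratic forms bound it.

* `S ≤ ‖S R‖ A` (`inner_le_norm_comp_inverse`).  The usual reason is that `A^{-1/2} S A^{-1/2}` and
  `S R` have the same spectral radius; a square-root-free argument by iterated Cauchy-Schwarz for
  the form `⟨A ·, ·⟩` is used here, as the space is real.
* `T ^ a ≤ λ ^ (a - 1) A` for `0 ≤ a ≤ 1` (`IsPowerFamily.inner_le`).  The function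
  `a ↦ λ ^ (-a) ⟨T ^ a x, x⟩` is midpoint convex and bounded on `[0, 1]`, hence at most the maximum
  of its values at the two endpoints (`le_of_midpoint_convex`).

The second one with `a = 2 r - 1` and Cauchy-Schwarz give `⟨P u, R P u⟩ ≤ λ ^ (2 r - 2) ‖u‖²`, and
the first one gives `λ² ⟨S R P u, R P u⟩ ≤ λ² ‖S R‖ ⟨P u, R P u⟩`.
-/

open MeasureTheory ContinuousLinearMap
open scoped RealInnerProductSpace

variable {H : Type*} [NormedAddCommGroup H] [InnerProductSpace ℝ H] [CompleteSpace H]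

/-- `Tpow` is the family of real powers `a ↦ T ^ a` (for `a ≥ 0`) of the positive
operator `T`, as produced by the continuous functional calculus.  These conditions
determine `Tpow` uniquely on `[0, ∞)`. -/
def IsPowerFamily (T : H →L[ℝ] H) (Tpow : ℝ → (H →L[ℝ] H)) : Prop :=
  Tpow 0 = 1 ∧ Tpow 1 = T
    ∧ (∀ a b : ℝ, 0 ≤ a → 0 ≤ b → Tpow (a + b) = Tpow a ∘L Tpow b)
    ∧ (∀ a : ℝ, 0 ≤ a → (Tpow a).IsPositive)
    ∧ ContinuousOn Tpow (Set.Ioi 0)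

/-- The covariance operator `T_μ := ∫ ψ(x) ⊗ ψ(x) dμ(x)` of a feature map `ψ`. -/
noncomputable def covOp {d : ℕ} (μ : Measure (Fin d → ℝ)) (ψ : (Fin d → ℝ) → H) :
    H →L[ℝ] H :=
  ∫ x, (innerSL ℝ (ψ x)).smulRight (ψ x) ∂μ

/-! ### Comparison of positive operators -/

theorem ContinuousLinearMap.IsPositive.inner_sq_le {A : H →L[ℝ] H} (hA : A.IsPositive) (x y : H) :
    ⟪A x, y⟫ ^ 2 ≤ ⟪A x, x⟫ * ⟪A y, y⟫ := by
  have hsymm : ⟪A y, x⟫ = ⟪A x, y⟫ := by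
    rw [hA.inner_left_eq_inner_right, real_inner_comm]
  have hquad : ∀ t : ℝ, 0 ≤ ⟪A y, y⟫ * (t * t) + (2 * ⟪A x, y⟫) * t + ⟪A x, x⟫ := by
    intro t
    have h := hA.inner_nonneg_left (x + t • y)
    simp only [map_add, map_smul, inner_add_left, inner_add_right, inner_smul_left,
      inner_smul_right, hsymm, conj_trivial] at h
    linarith
  have h := discrim_le_zero hquad
  rw [discrim] at h
  linarith

/-- If `S` and `A` are positive and `R = A⁻¹`, then `S ≤ ‖S R‖ A` as quadratic forms.  The numbers
`a n = ⟨(S R) ^ n A x, x⟩` satisfy `a n ^ 2 ≤ a 0 * a (2 * n)`, so `a (2 ^ n)` grows at least like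
`(a 1 / a 0) ^ (2 ^ n)`; on the other hand it grows at most like `‖S R‖ ^ (2 ^ n)`. -/
theorem inner_le_norm_comp_inverse {S A R : H →L[ℝ] H} (hS : S.IsPositive) (hA : A.IsPositive)
    (hAR : A * R = 1) (hRA : R * A = 1) (x : H) :
    ⟪S x, x⟫ ≤ ‖S * R‖ * ⟪A x, x⟫ := by
  have hARx : ∀ y, A (R y) = y := fun y => by
    simpa using congrArg (fun f : H →L[ℝ] H => f y) hAR
  have hRAx : ∀ y, R (A y) = y := fun y => by
    simpa using congrArg (fun f : H →L[ℝ] H => f y) hRA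
  have hRsymm : ∀ y z, ⟪R y, z⟫ = ⟪y, R z⟫ := fun y z => by
    conv_lhs => rw [← hARx z, ← hA.inner_left_eq_inner_right, hARx]
  set M := S * R with hM
  have hadj : ∀ (n : ℕ) (w z : H), ⟪w, ((R * S) ^ n) z⟫ = ⟪(M ^ n) w, z⟫ := by
    intro n
    induction n with
    | zero => intro w z; simp
    | succ n ih =>
      intro w z
      rw [pow_succ, pow_succ', mul_apply_eq_comp, mul_apply_eq_comp, ih, hM, mul_apply_eq_comp,
        mul_apply_eq_comp, ← hRsymm, ← hS.inner_left_eq_inner_right]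
  have hcomm : ∀ n : ℕ, A * (R * S) ^ n = M ^ n * A := by
    intro n
    have h : SemiconjBy A (R * S) M := by
      rw [SemiconjBy, hM, ← mul_assoc, hAR, mul_assoc, hRA, one_mul, mul_one]
    exact (h.pow_right n).eq
  have hcommx : ∀ (n : ℕ) (y : H), A (((R * S) ^ n) y) = (M ^ n) (A y) := fun n y => by
    simpa using congrArg (fun f : H →L[ℝ] H => f y) (hcomm n)
  set a : ℕ → ℝ := fun n => ⟪(M ^ n) (A x), x⟫ with ha
  have ha0 : a 0 = ⟪A x, x⟫ := by simp [ha]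
  have ha1 : a 1 = ⟪S x, x⟫ := by simp [ha, hM, hRAx]
  have hsq : ∀ n, a n ^ 2 ≤ a 0 * a (2 * n) := by
    intro n
    have h := hA.inner_sq_le (((R * S) ^ n) x) x
    rw [hadj, hcommx, mul_comm] at h
    rw [ha0]
    simpa only [ha, two_mul, pow_add, mul_apply_eq_comp] using h
  have hub : ∀ n, a n ≤ (‖A x‖ * ‖x‖) * ‖M‖ ^ n := by
    intro n
    calc a n ≤ ‖(M ^ n) (A x)‖ * ‖x‖ := real_inner_le_norm _ _
      _ ≤ (‖M‖ ^ n * ‖A x‖) * ‖x‖ := by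
        gcongr
        refine (le_opNorm _ _).trans ?_
        gcongr
        rcases Nat.eq_zero_or_pos n with rfl | hn
        · rw [pow_zero, pow_zero]; exact norm_id_le
        · exact norm_pow_le' _ hn
      _ = _ := by ring
  by_contra! hlt
  rw [← ha0, ← ha1] at hlt
  have ha0nn : 0 ≤ a 0 := by rw [ha0]; exact hA.inner_nonneg_left x
  have ha1pos : 0 < a 1 := lt_of_le_of_lt (mul_nonneg (norm_nonneg _) ha0nn) hlt
  have ha0pos : 0 < a 0 := by
    rcases ha0nn.eq_or_lt with h | h
    · have := hsq 1
      rw [← h, zero_mul] at this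
      nlinarith
    · exact h
  set t := a 1 / a 0 with ht
  have htpos : 0 < t := div_pos ha1pos ha0pos
  have hMt : ‖M‖ < t := by rwa [ht, lt_div_iff₀ ha0pos]
  have hlb : ∀ n : ℕ, a 0 * t ^ (2 ^ n) ≤ a (2 ^ n) := by
    intro n
    induction n with
    | zero => rw [pow_zero, pow_one, ht, mul_div_cancel₀ _ ha0pos.ne']
    | succ n ih =>
      have h1 := hsq (2 ^ n)
      have h2 : (a 0 * t ^ (2 ^ n)) ^ 2 ≤ a (2 ^ n) ^ 2 := by gcongr
      rw [← pow_succ'] at h1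
      have h3 : a 0 * (a 0 * t ^ (2 ^ (n + 1))) ≤ a 0 * a (2 ^ (n + 1)) := by
        calc a 0 * (a 0 * t ^ (2 ^ (n + 1))) = (a 0 * t ^ (2 ^ n)) ^ 2 := by ring
          _ ≤ _ := h2.trans h1
      exact le_of_mul_le_mul_left h3 ha0pos
  have hbound : ∀ n : ℕ, a 0 ≤ (‖A x‖ * ‖x‖) * (‖M‖ / t) ^ (2 ^ n) := by
    intro n
    have h := (hlb n).trans (hub (2 ^ n))
    rw [div_pow, ← mul_div_assoc, le_div_iff₀ (by positivity)]
    exact h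
  have hlim : Filter.Tendsto (fun n : ℕ => (‖A x‖ * ‖x‖) * (‖M‖ / t) ^ (2 ^ n)) Filter.atTop
      (nhds ((‖A x‖ * ‖x‖) * 0)) :=
    ((tendsto_pow_atTop_nhds_zero_of_lt_one (by positivity)
      ((div_lt_one htpos).2 hMt)).comp
        (tendsto_pow_atTop_atTop_of_one_lt (by norm_num : 1 < 2))).const_mul _
  have := ge_of_tendsto' hlim hbound
  linarith

/-! ### Powers of a positive operator -/

/-- A midpoint convex function on `[0, 1]` which is continuous on `(0, 1]` is bounded by the maximum
of its values at `0` and `1`.  Continuity bounds it on `[1/2, 1]`, halving extends the bound to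
`[0, 1]`, and then the supremum `s` satisfies `s ≤ (M + s) / 2`. -/
theorem le_of_midpoint_convex {h : ℝ → ℝ} {M : ℝ} (h0 : h 0 ≤ M) (h1 : h 1 ≤ M)
    (hmid : ∀ a b, 0 ≤ a → 0 ≤ b → h ((a + b) / 2) ≤ (h a + h b) / 2)
    (hcont : ContinuousOn h (Set.Ioi 0)) {a : ℝ} (ha : a ∈ Set.Icc (0 : ℝ) 1) : h a ≤ M := by
  have hlow : ∀ b, 0 ≤ b → h b ≤ (M + h (2 * b)) / 2 := by
    intro b hb
    have := hmid 0 (2 * b) le_rfl (by linarith)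
    rw [show (0 + 2 * b) / 2 = b by ring] at this
    linarith
  have hhigh : ∀ b, 1 / 2 ≤ b → h b ≤ (M + h (2 * b - 1)) / 2 := by
    intro b hb
    have := hmid 1 (2 * b - 1) zero_le_one (by linarith)
    rw [show (1 + (2 * b - 1)) / 2 = b by ring] at this
    linarith
  obtain ⟨C, hC⟩ : ∃ C, ∀ b ∈ Set.Icc (1 / 2 : ℝ) 1, h b ≤ C := by
    have hc : ContinuousOn h (Set.Icc (1 / 2 : ℝ) 1) :=
      hcont.mono fun b hb => lt_of_lt_of_le (by norm_num) hb.1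
    obtain ⟨C, hC⟩ := isCompact_Icc.bddAbove_image hc
    exact ⟨C, fun b hb => hC ⟨b, hb, rfl⟩⟩
  have hdyadic : ∀ n : ℕ, ∀ b, b ≤ 1 → 1 / 2 ≤ 2 ^ n * b → h b ≤ max M C := by
    intro n
    induction n with
    | zero => intro b hb hb'; exact (hC b ⟨by simpa using hb', hb⟩).trans (le_max_right _ _)
    | succ n ih =>
      intro b hb hb'
      by_cases hb2 : 1 / 2 ≤ b
      · exact (hC b ⟨hb2, hb⟩).trans (le_max_right _ _)
      · have hb0 : 0 ≤ b := by
          by_contra! hneg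
          have : (2 : ℝ) ^ (n + 1) * b ≤ 0 :=
            mul_nonpos_of_nonneg_of_nonpos (by positivity) hneg.le
          linarith
        have h2 := ih (2 * b) (by linarith) (by rw [pow_succ] at hb'; linarith)
        have := hlow b hb0
        have := le_max_left M C
        linarith
  have hbdd : ∀ b ∈ Set.Icc (0 : ℝ) 1, h b ≤ max M C := by
    rintro b ⟨hb0, hb1⟩
    rcases hb0.eq_or_lt with rfl | hpos
    · exact h0.trans (le_max_left _ _)
    · obtain ⟨n, hn⟩ := pow_unbounded_of_one_lt (1 / 2 / b) (one_lt_two : (1 : ℝ) < 2)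
      exact hdyadic n b hb1 ((div_lt_iff₀ hpos).1 hn).le
  have hB : BddAbove (h '' Set.Icc (0 : ℝ) 1) := by
    refine ⟨max M C, ?_⟩
    rintro _ ⟨b, hb, rfl⟩
    exact hbdd b hb
  set s := sSup (h '' Set.Icc (0 : ℝ) 1) with hs
  have hle : ∀ b ∈ Set.Icc (0 : ℝ) 1, h b ≤ s := fun b hb => le_csSup hB ⟨b, hb, rfl⟩
  have hself : s ≤ (M + s) / 2 := by
    refine csSup_le ⟨_, 0, by simp, rfl⟩ ?_
    rintro _ ⟨b, ⟨hb0, hb1⟩, rfl⟩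
    rcases le_total b (1 / 2) with hb | hb
    · have := hlow b hb0
      have := hle (2 * b) ⟨by linarith, by linarith⟩
      linarith
    · have := hhigh b hb
      have := hle (2 * b - 1) ⟨by linarith, by linarith⟩
      linarith
  have := hle a ha
  linarith

/-- The operator form of the scalar inequality `t ^ a ≤ λ ^ (a - 1) (t + λ)`, `0 ≤ a ≤ 1`. -/
theorem IsPowerFamily.inner_le {T : H →L[ℝ] H} {Tpow : ℝ → (H →L[ℝ] H)}
    (hpow : IsPowerFamily T Tpow) {lam : ℝ} (hlam : 0 < lam) {a : ℝ}
    (ha : a ∈ Set.Icc (0 : ℝ) 1) (x : H) :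
    ⟪Tpow a x, x⟫ ≤ lam ^ (a - 1) * ⟪(T + lam • (1 : H →L[ℝ] H)) x, x⟫ := by
  obtain ⟨hp0, hp1, hadd, hpos, hcont⟩ := hpow
  have hhalf : ∀ b, 0 ≤ b → ⟪Tpow b x, x⟫ = ‖Tpow (b / 2) x‖ ^ 2 := by
    intro b hb
    have hb2 : 0 ≤ b / 2 := by linarith
    conv_lhs => rw [show b = b / 2 + b / 2 by ring, hadd _ _ hb2 hb2, comp_apply,
      (hpos _ hb2).inner_left_eq_inner_right, real_inner_self_eq_norm_sq]
  set A := T + lam • (1 : H →L[ℝ] H) with hA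
  have hAx : ⟪A x, x⟫ = ⟪T x, x⟫ + lam * ‖x‖ ^ 2 := by
    simp [hA, inner_add_left, inner_smul_left]
  have hTx : 0 ≤ ⟪T x, x⟫ := by
    rw [← hp1]; exact (hpos 1 zero_le_one).inner_nonneg_left x
  have key : lam ^ (-a) * ⟪Tpow a x, x⟫ ≤ lam⁻¹ * ⟪A x, x⟫ := by
    refine le_of_midpoint_convex (h := fun b => lam ^ (-b) * ⟪Tpow b x, x⟫) ?_ ?_ ?_ ?_ ha
    · simp only [hp0, neg_zero, Real.rpow_zero, one_mul, one_apply_eq_self, hAx,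
        real_inner_self_eq_norm_sq, mul_add, inv_mul_cancel_left₀ hlam.ne']
      have := mul_nonneg (inv_nonneg.2 hlam.le) hTx
      linarith
    · simp only [hp1, Real.rpow_neg_one, hAx]
      gcongr
      have : 0 ≤ lam * ‖x‖ ^ 2 := by positivity
      linarith
    · intro b c hb hc
      have hb2 : 0 ≤ b / 2 := by linarith
      have hc2 : 0 ≤ c / 2 := by linarith
      have hmid : ⟪Tpow ((b + c) / 2) x, x⟫ ≤ ‖Tpow (b / 2) x‖ * ‖Tpow (c / 2) x‖ := by
        rw [add_div, hadd _ _ hb2 hc2, comp_apply, (hpos _ hb2).inner_left_eq_inner_right,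
          mul_comm]
        exact real_inner_le_norm _ _
      have hsq : ∀ e : ℝ, lam ^ (-e) = (lam ^ (-e / 2)) ^ 2 := fun e => by
        rw [← Real.rpow_natCast, ← Real.rpow_mul hlam.le]
        congr 1
        push_cast
        ring
      have hprod : lam ^ (-((b + c) / 2)) = lam ^ (-b / 2) * lam ^ (-c / 2) := by
        rw [← Real.rpow_add hlam]
        congr 1
        ring
      simp only [hhalf b hb, hhalf c hc]
      rw [hsq b, hsq c, hprod]
      have hnn : 0 ≤ lam ^ (-b / 2) * lam ^ (-c / 2) := by positivity
      have := mul_le_mul_of_nonneg_left hmid hnn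
      nlinarith [sq_nonneg (lam ^ (-b / 2) * ‖Tpow (b / 2) x‖
        - lam ^ (-c / 2) * ‖Tpow (c / 2) x‖)]
    · refine ContinuousOn.mul ?_ ?_
      · exact (Real.continuous_const_rpow hlam.ne').comp continuous_neg |>.continuousOn
      · exact (hcont.clm_apply continuousOn_const).inner continuousOn_const
  have hpa : 0 < lam ^ a := Real.rpow_pos_of_pos hlam a
  calc ⟪Tpow a x, x⟫ = lam ^ a * (lam ^ (-a) * ⟪Tpow a x, x⟫) := by
        rw [← mul_assoc, ← Real.rpow_add hlam, add_neg_cancel, Real.rpow_zero, one_mul]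
    _ ≤ lam ^ a * (lam⁻¹ * ⟪A x, x⟫) := by gcongr
    _ = _ := by rw [Real.rpow_sub_one hlam.ne']; ring

/-! ### The covariance operator -/

section Covariance

variable {d : ℕ} {μ : Measure (Fin d → ℝ)} [IsProbabilityMeasure μ] {ψ : (Fin d → ℝ) → H} {κ : ℝ}

theorem inner_covOp (hψ : StronglyMeasurable ψ) (hκ : ∀ x, ‖ψ x‖ ^ 2 ≤ κ) (v w : H) :
    ⟪covOp μ ψ v, w⟫ = ∫ x, ⟪ψ x, v⟫ * ⟪ψ x, w⟫ ∂μ := by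
  have hint : Integrable (fun x => (innerSL ℝ (ψ x)).smulRight (ψ x)) μ := by
    refine Integrable.of_bound (C := κ) ?_ (Filter.Eventually.of_forall fun x => ?_)
    · have hc : Continuous fun y : H => (innerSL ℝ y).smulRight y :=
        ((smulRightL ℝ H H).continuous.comp (innerSL ℝ).continuous).clm_apply continuous_id
      exact (hc.comp_stronglyMeasurable hψ).aestronglyMeasurable
    · rw [norm_smulRight_apply, innerSL_apply_norm, ← sq]
      exact hκ x
  rw [covOp, integral_apply hint, real_inner_comm,
    ← integral_inner (hint.apply_continuousLinearMap v)]
  simp [inner_smul_right, real_inner_comm]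

theorem covOp_isPositive (hψ : StronglyMeasurable ψ) (hκ : ∀ x, ‖ψ x‖ ^ 2 ≤ κ) :
    (covOp μ ψ).IsPositive := by
  rw [isPositive_iff]
  constructor
  · intro v w
    change ⟪covOp μ ψ v, w⟫ = ⟪v, covOp μ ψ w⟫
    rw [real_inner_comm _ v, inner_covOp hψ hκ, inner_covOp hψ hκ]
    simp only [mul_comm]
  · intro v
    rw [inner_covOp hψ hκ]
    exact integral_nonneg fun x => mul_self_nonneg _

end Covariance

/-! ### The regularization bias -/

/-- **Regularization bias under the source condition.** -/
theorem stmt_15 {d : ℕ} [TopologicalSpace.SeparableSpace H]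
    (q qbar : Measure (Fin d → ℝ)) [IsProbabilityMeasure q] [IsProbabilityMeasure qbar]
    (ψ : (Fin d → ℝ) → H) (hψ : StronglyMeasurable ψ)
    (κ : ℝ) (hκ : ∀ x, ‖ψ x‖ ^ 2 ≤ κ)
    (Tpow : ℝ → (H →L[ℝ] H)) (hpow : IsPowerFamily (covOp qbar ψ) Tpow)
    (r : ℝ) (hr : r ∈ Set.Icc (1 / 2 : ℝ) 1) (u : H)
    (lam : ℝ) (hlam : 0 < lam) :
    Real.sqrt (∫ x,
        (⟪ψ x, (Ring.inverse (covOp qbar ψ + lam • (1 : H →L[ℝ] H))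
            ∘L covOp qbar ψ ∘L Tpow (r - 1 / 2)) u⟫
          - ⟪ψ x, Tpow (r - 1 / 2) u⟫) ^ 2 ∂q)
      ≤ lam ^ r
          * Real.sqrt ‖covOp q ψ ∘L Ring.inverse (covOp qbar ψ + lam • (1 : H →L[ℝ] H))‖
          * ‖u‖ := by
  set T := covOp qbar ψ with hT
  set S := covOp q ψ with hS
  set A := T + lam • (1 : H →L[ℝ] H) with hA
  set R := Ring.inverse A with hR
  set P := Tpow (r - 1 / 2) with hP
  have hTpos : T.IsPositive := covOp_isPositive hψ hκ
  have hSpos : S.IsPositive := covOp_isPositive hψ hκ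
  have hApos : A.IsPositive := hTpos.add (isPositive_one.smul_of_nonneg hlam.le)
  have hAunit : IsUnit A := by
    refine isUnit_of_forall_le_norm_inner_map A (c := lam.toNNReal) (Real.toNNReal_pos.2 hlam) fun x => ?_
    have hx : ⟪A x, x⟫ = ⟪T x, x⟫ + lam * ‖x‖ ^ 2 := by
      simp [hA, inner_add_left, inner_smul_left]
    have := hTpos.inner_nonneg_left x
    refine le_trans ?_ (le_abs_self _)
    rw [hx, Real.coe_toNNReal _ hlam.le]
    linarith
  have hAR : A * R = 1 := Ring.mul_inverse_cancel A hAunit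
  have hRA : R * A = 1 := Ring.inverse_mul_cancel A hAunit
  have hs : 0 ≤ r - 1 / 2 := by linarith [hr.1]
  set y := R (P u) with hy
  have hAy : A y = P u := by
    simpa using congrArg (fun f : H →L[ℝ] H => f (P u)) hAR
  have hdiff : (R ∘L T ∘L P) u = P u - lam • y := by
    have h1 : T (P u) = A (P u) - lam • P u := by simp [hA]
    have h2 : R (A (P u)) = P u := by
      simpa using congrArg (fun f : H →L[ℝ] H => f (P u)) hRA
    rw [comp_apply, comp_apply, h1, map_sub, map_smul, h2]
  have hint : ∫ x, (⟪ψ x, (R ∘L T ∘L P) u⟫ - ⟪ψ x, P u⟫) ^ 2 ∂q = lam ^ 2 * ⟪S y, y⟫ := by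
    rw [inner_covOp hψ hκ, ← integral_const_mul]
    congr 1
    ext x
    rw [hdiff, inner_sub_right, inner_smul_right]
    ring
  have hSA : ⟪S y, y⟫ ≤ ‖S ∘L R‖ * ⟪A y, y⟫ :=
    inner_le_norm_comp_inverse hSpos hApos hAR hRA y
  have hE : ⟪A y, y⟫ ≤ lam ^ (2 * r - 2) * ‖u‖ ^ 2 := by
    have hPpos : P.IsPositive := hpow.2.2.2.1 _ hs
    have hPy : ‖P y‖ ^ 2 ≤ lam ^ (2 * r - 2) * ⟪A y, y⟫ := by
      have h := hpow.inner_le hlam (a := (r - 1 / 2) + (r - 1 / 2))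
        ⟨by linarith, by linarith [hr.2]⟩ y
      rw [hpow.2.2.1 _ _ hs hs, comp_apply, hPpos.inner_left_eq_inner_right,
        real_inner_self_eq_norm_sq] at h
      convert h using 3
      ring
    have hCS : ⟪A y, y⟫ ≤ ‖u‖ * ‖P y‖ := by
      rw [hAy, hPpos.inner_left_eq_inner_right]
      exact real_inner_le_norm _ _
    have hE0 : 0 ≤ ⟪A y, y⟫ := hApos.inner_nonneg_left y
    have hc : 0 < lam ^ (2 * r - 2) := Real.rpow_pos_of_pos hlam _
    rcases hE0.eq_or_lt with h | h
    · rw [← h]; positivity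
    · have hsq : ⟪A y, y⟫ ^ 2 ≤ (‖u‖ * ‖P y‖) ^ 2 := by gcongr
      rw [mul_pow] at hsq
      have h2 : ‖u‖ ^ 2 * ‖P y‖ ^ 2 ≤ ‖u‖ ^ 2 * (lam ^ (2 * r - 2) * ⟪A y, y⟫) := by gcongr
      refine le_of_mul_le_mul_right ?_ h
      linarith
  rw [hint]
  refine Real.sqrt_le_iff.2 ⟨by positivity, ?_⟩
  have hlampow : (lam ^ r) ^ 2 = lam ^ 2 * lam ^ (2 * r - 2) := by
    rw [← Real.rpow_natCast, ← Real.rpow_mul hlam.le, ← Real.rpow_natCast lam 2,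
      ← Real.rpow_add hlam]
    congr 1
    push_cast
    ring
  calc lam ^ 2 * ⟪S y, y⟫ ≤ lam ^ 2 * (‖S ∘L R‖ * (lam ^ (2 * r - 2) * ‖u‖ ^ 2)) := by
        gcongr
        exact hSA.trans (by gcongr)
    _ = (lam ^ r * √‖S ∘L R‖ * ‖u‖) ^ 2 := by
        rw [mul_pow, mul_pow, hlampow, Real.sq_sqrt (norm_nonneg _)]
        ring
end
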